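/- arXiv:1105.2755 — 6 statements merged into one kernel-verified Lean document; each statement's English description precedes it below -/
import Mathlib

section
/- Assume persistent connectivity and cut-balanced weights with constant K ≥ 1. Let P : [0,∞) → ℕ be defined by P(t) = p when t ∈ [t_p, t_{p+1}). Then for all t ≥ 0, Δ_N(t) ≤ (1 − 1/(8Kn²)^{⌊n/2⌋})^{P(t)} · Δ_N(0). -/
/-!
The diameter contracts over each epoch `[t_p, t_{p+1}]`, and never increases, so the bound follows by
induction on `p`.

For the contraction, let `D` be the diameter at `t_p`. Each agent is at distance at least `D / 2` from
the minimum or from the maximum, so at least `n - ⌊n/2⌋` agents are so for the same end. After an affine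
change `z = x - min` or `z = max - x` the values are nonnegative and at most `⌊n/2⌋` of them are below
`D / 2`; it remains to show that at `t_{p+1}` all of them are at least `(D / 2) / (16 K) ^ ⌊n/2⌋`.

The quantity followed is `V_k = z₍₁₎ + K⁻¹ z₍₂₎ + ⋯ + K^{-(k-1)} z₍ₖ₎`, a weighted sum of the `k` lowest
values (`sortSum`). Cut balance makes it nondecreasing in time (`sorted_drift`, `sortSum_mono`): although
the order of the agents changes, `V_k` is the minimum over permutations of linear functions of `z`, and a
minimum of absolutely continuous functions grows at the rate of any minimiser (`envelope_growth`).
The cascade `step` shows that if `V_{k+1} ≥ A` at the start of an interval over which each cut accumulates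
`1`, then `V_k ≥ A / 16` at its end. Starting from `V_{⌊n/2⌋+1} ≥ K^{-⌊n/2⌋} D / 2`, after `⌊n/2⌋` intervals
this bounds `V_1`, the minimum, from below (`epoch`). The stated constant follows from `8 n² ≥ 2 · 16`.
-/

open MeasureTheory Filter Finset
open scoped ENNReal

/-- Interaction weights: non-negative, measurable, integrable on bounded intervals. -/
def IsWeight (n : ℕ) (a : Fin n → Fin n → ℝ → ℝ) : Prop :=
  ∀ i j : Fin n, (∀ t, 0 ≤ a i j t) ∧ Measurable (a i j) ∧
    ∀ T : ℝ, IntervalIntegrable (a i j) MeasureTheory.volume 0 T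

/-- A trajectory of the continuous-time consensus system: a (locally absolutely) continuous
function satisfying the Carathéodory integral equation. -/
def IsTrajectory (n : ℕ) (a : Fin n → Fin n → ℝ → ℝ) (x : ℝ → Fin n → ℝ) : Prop :=
  (∀ i : Fin n, ContinuousOn (fun t => x t i) (Set.Ici (0:ℝ))) ∧
  (∀ i : Fin n, ∀ t : ℝ, 0 ≤ t →
    IntervalIntegrable (fun s => ∑ j : Fin n, a i j s * (x s j - x s i))
      MeasureTheory.volume 0 t ∧
    x t i = x 0 i + ∫ s in (0:ℝ)..t, ∑ j : Fin n, a i j s * (x s j - x s i))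

/-- Group diameter Δ_N(t). -/
noncomputable def diam (n : ℕ) (x : ℝ → Fin n → ℝ) (t : ℝ) : ℝ :=
  (⨆ i, x t i) - (⨅ i, x t i)

/-- Persistent connectivity: the graph with edge (j,i) whenever ∫_0^∞ a_{ij} = ∞
is strongly connected. -/
def PersistentConn (n : ℕ) (a : Fin n → Fin n → ℝ → ℝ) : Prop :=
  ∀ u v : Fin n, Relation.ReflTransGen
    (fun j i => ∫⁻ s in Set.Ioi (0:ℝ), ENNReal.ofReal (a i j s) = ⊤) u v

noncomputable def cutSum (n : ℕ) (a : Fin n → Fin n → ℝ → ℝ)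
    (S : Finset (Fin n)) (t0 t : ℝ) : ℝ :=
  ∑ i ∈ S, ∑ j ∈ Sᶜ, ∫ s in t0..t, a i j s

noncomputable def minCut (n : ℕ) (a : Fin n → Fin n → ℝ → ℝ) (t0 t : ℝ) : ℝ :=
  sInf ((fun S => cutSum n a S t0 t) '' {S : Finset (Fin n) | S.Nonempty ∧ S ≠ Finset.univ})

/-- The smallest `t ≥ t0` with `minCut n a t0 t = 1`. -/
noncomputable def nextTime (n : ℕ) (a : Fin n → Fin n → ℝ → ℝ) (t0 : ℝ) : ℝ :=
  sInf {t : ℝ | t0 ≤ t ∧ minCut n a t0 t = 1}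

/-- The rescaling sequence (t_p): t_0 = 0 and t_{p+1} is obtained from t_p by ⌊n/2⌋
steps of `nextTime`. -/
noncomputable def tpSeq (n : ℕ) (a : Fin n → Fin n → ℝ → ℝ) : ℕ → ℝ :=
  fun p => ((nextTime n a)^[n/2])^[p] 0

/-- Intermediate times t_p^q. -/
noncomputable def tpq (n : ℕ) (a : Fin n → Fin n → ℝ → ℝ) (p q : ℕ) : ℝ :=
  (nextTime n a)^[q] (tpSeq n a p)

open Classical in
/-- The ratio r_S(t) of reciprocal interaction weights across the cut (S, N∖S). -/
noncomputable def rS (n : ℕ) (a : Fin n → Fin n → ℝ → ℝ) (S : Finset (Fin n)) (t : ℝ) : ℝ≥0∞ :=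
  if 0 < ∑ i ∈ S, ∑ j ∈ Sᶜ, a j i t then
    ENNReal.ofReal ((∑ i ∈ S, ∑ j ∈ Sᶜ, a i j t) / (∑ i ∈ S, ∑ j ∈ Sᶜ, a j i t))
  else if (∑ i ∈ S, ∑ j ∈ Sᶜ, a i j t) = 0 then 1 else ⊤

/-- r(t): maximal ratio over nonempty proper subsets. -/
noncomputable def rmax (n : ℕ) (a : Fin n → Fin n → ℝ → ℝ) (t : ℝ) : ℝ≥0∞ :=
  ⨆ S ∈ {S : Finset (Fin n) | S.Nonempty ∧ S ≠ Finset.univ}, rS n a S t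

/-- 𝐫(t) = sup_{s ∈ [0,t]} r(s). -/
noncomputable def rbold (n : ℕ) (a : Fin n → Fin n → ℝ → ℝ) (t : ℝ) : ℝ≥0∞ :=
  ⨆ s ∈ Set.Icc (0:ℝ) t, rmax n a s

/-- σ_t sorts the pairs (x_i(t), i) lexicographically. -/
def IsSortingPerm (n : ℕ) (x : ℝ → Fin n → ℝ) (σ : ℝ → Equiv.Perm (Fin n)) : Prop :=
  ∀ t : ℝ, ∀ i j : Fin n, i < j →
    x t (σ t i) < x t (σ t j) ∨ (x t (σ t i) = x t (σ t j) ∧ σ t i < σ t j)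


/-! ### Growth of a finite minimum of primitives -/

/-- Let `V` be the pointwise minimum of finitely many primitives `f i` of `g i`. If at each time some
minimising `f i` has `h ≤ g i`, then `V` grows at least by the integral of `h`. Adding the primitive of
`∑ |g i|` makes `V` monotone, hence differentiable almost everywhere, and at such a point `V` has the
derivative of each `f i` touching it. -/
lemma envelope_growth {ι : Type*} [Fintype ι] {a b : ℝ} (hab : a ≤ b) (f g : ι → ℝ → ℝ)
    (h V : ℝ → ℝ) (hg : ∀ i, IntervalIntegrable (g i) volume a b)
    (hh : IntervalIntegrable h volume a b)
    (hf : ∀ i, ∀ t ∈ Set.Icc a b, f i t = f i a + ∫ s in a..t, g i s)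
    (hV : ∀ i, ∀ t ∈ Set.Icc a b, V t ≤ f i t)
    (hE : ∀ t ∈ Set.Icc a b, ∃ i, V t = f i t ∧ h t ≤ g i t) :
    V a + ∫ s in a..b, h s ≤ V b := by
  set G : ℝ → ℝ := fun s => ∑ i, |g i s| with hGdef
  have hG : IntervalIntegrable G volume a b := by
    have : G = ∑ i, fun s => |g i s| := by ext s; simp [G]
    rw [this]
    exact IntervalIntegrable.sum _ (fun i _ => (hg i).abs)
  have sub : ∀ {φ : ℝ → ℝ}, IntervalIntegrable φ volume a b → ∀ {u v : ℝ}, u ∈ Set.Icc a b →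
      v ∈ Set.Icc a b → IntervalIntegrable φ volume u v := by
    intro φ hφ u v hu hv
    refine hφ.mono_set ?_
    rw [Set.uIcc_of_le hab]
    exact Set.uIcc_subset_Icc hu hv
  have haI : a ∈ Set.Icc a b := ⟨le_rfl, hab⟩
  have hbI : b ∈ Set.Icc a b := ⟨hab, le_rfl⟩
  set W : ℝ → ℝ := fun t => V t + ∫ s in a..t, G s with hWdef
  have hmono : MonotoneOn W (Set.uIcc a b) := by
    rw [Set.uIcc_of_le hab]
    intro u hu v hv huv
    obtain ⟨i, hi, -⟩ := hE v hv
    have h1 := hV i u hu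
    have e1 : (∫ s in a..u, g i s) + ∫ s in u..v, g i s = ∫ s in a..v, g i s :=
      intervalIntegral.integral_add_adjacent_intervals (sub (hg i) haI hu) (sub (hg i) hu hv)
    have e2 : (∫ s in a..u, G s) + ∫ s in u..v, G s = ∫ s in a..v, G s :=
      intervalIntegral.integral_add_adjacent_intervals (sub hG haI hu) (sub hG hu hv)
    have e3 : ∫ s in u..v, -g i s ≤ ∫ s in u..v, G s := by
      refine intervalIntegral.integral_mono_on huv (sub (hg i) hu hv).neg (sub hG hu hv) ?_
      intro s _
      exact (neg_le_abs _).trans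
        (Finset.single_le_sum (f := fun i => |g i s|) (fun j _ => abs_nonneg _) (mem_univ i))
    rw [intervalIntegral.integral_neg] at e3
    have f1 := hf i u hu
    have f2 := hf i v hv
    simp only [hWdef]
    linarith
  have hmem := hmono.intervalIntegral_deriv_mem_uIcc
  have hWab : W a ≤ W b := hmono (by simp) (by simp) hab
  rw [Set.uIcc_of_le (by linarith)] at hmem
  have key : ∫ s in a..b, (h s + G s) ≤ ∫ s in a..b, deriv W s := by
    refine intervalIntegral.integral_mono_ae_restrict hab (hh.add hG)
      hmono.intervalIntegrable_deriv ?_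
    have hae : ∀ᵐ t, ∀ i, t ∈ Set.uIcc a b → ∀ c ∈ Set.uIcc a b,
        HasDerivAt (fun x => ∫ s in c..x, g i s) (g i t) t :=
      ae_all_iff.2 fun i => (hg i).ae_hasDerivAt_integral
    have hna : ∀ᵐ t : ℝ, t ≠ a := by simp [ae_iff, measure_singleton]
    have hnb : ∀ᵐ t : ℝ, t ≠ b := by simp [ae_iff, measure_singleton]
    rw [Filter.EventuallyLE, ae_restrict_iff' measurableSet_Icc]
    filter_upwards [hae, hG.ae_hasDerivAt_integral, hmono.ae_differentiableWithinAt_of_mem,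
      hna, hnb] with t h1 h2 h3 hta htb ht
    have ht' : t ∈ Set.Ioo a b := ⟨lt_of_le_of_ne ht.1 (Ne.symm hta), lt_of_le_of_ne ht.2 htb⟩
    have hn : Set.Icc a b ∈ nhds t := Icc_mem_nhds ht'.1 ht'.2
    rw [Set.uIcc_of_le hab] at h1 h2 h3
    obtain ⟨i, hi, hhi⟩ := hE t ht
    have dW : HasDerivAt W (deriv W t) t := ((h3 ht).differentiableAt hn).hasDerivAt
    have dφ := (((h1 i ht a haI).const_add (f i a)).add (h2 ht a haI)).sub dW
    -- `f i + ∫ G - W = f i - V` is nonnegative and vanishes at `t`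
    have hmin : IsLocalMin ((((fun x => f i a + ∫ s in a..x, g i s) +
        (fun x => ∫ s in a..x, G s)) - W)) t := by
      filter_upwards [hn] with x hx
      have := hV i x hx
      rw [hf i x hx] at this
      have h4 := hf i t ht
      simp only [Pi.sub_apply, Pi.add_apply, hWdef]
      linarith
    have := hmin.hasDerivAt_eq_zero dφ
    show h t + G t ≤ deriv W t
    linarith
  rw [intervalIntegral.integral_add hh hG] at key
  have e : W b - W a = V b + (∫ s in a..b, G s) - V a := by simp [hWdef]
  linarith [hmem.2]

/-! ### Drift of a sorted configuration -/

/-- The weights `1, K⁻¹, …, K^{-(k-1)}, 0, …, 0`, with positions counted from `0`. -/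
noncomputable def wt (K : ℝ) (k i : ℕ) : ℝ := if i < k then K⁻¹ ^ i else 0

lemma wt_nonneg {K : ℝ} (hK : 1 ≤ K) (k i : ℕ) : 0 ≤ wt K k i := by
  unfold wt; split_ifs <;> positivity

lemma wt_anti {K : ℝ} (hK : 1 ≤ K) (k : ℕ) : Antitone (wt K k) := by
  intro i j hij
  unfold wt
  split_ifs with h1 h2
  · exact pow_le_pow_of_le_one (by positivity) (inv_le_one_of_one_le₀ hK) hij
  · omega
  · positivity
  · exact le_rfl

lemma wt_ratio {K : ℝ} (hK : 1 ≤ K) (k i : ℕ) : K * wt K k (i + 1) ≤ wt K k i := by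
  unfold wt
  have : K ≠ 0 := by positivity
  split_ifs with h1 h2
  · rw [pow_succ]; field_simp; exact le_rfl
  · omega
  · simp; positivity
  · simp

/-- The key inequality. Writing `w l - w i` as a sum of consecutive gaps, the gap above position `r`
gets the coefficient `∑ (c i * b i l - c l * b l i)` over `i ≤ r < l`, which cut balance and
`K * c (r + 1) ≤ c r` make nonnegative. Keeping only the gap at `k` gives the bound. -/
lemma sorted_drift {n : ℕ} {K : ℝ} (hK : 1 ≤ K) (w : Fin n → ℝ) (hw : Monotone w)
    (b : Fin n → Fin n → ℝ) (hb : ∀ i j, 0 ≤ b i j)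
    (hcut : ∀ r : ℕ, ∑ i : Fin n with i.val ≤ r, ∑ l : Fin n with ¬ l.val ≤ r, b l i ≤
      K * ∑ i : Fin n with i.val ≤ r, ∑ l : Fin n with ¬ l.val ≤ r, b i l)
    (k : ℕ) (hk : k + 1 < n) :
    K⁻¹ ^ k * (w ⟨k + 1, hk⟩ - w ⟨k, by omega⟩) *
        (∑ i : Fin n with i.val ≤ k, ∑ l : Fin n with ¬ l.val ≤ k, b i l) ≤
      ∑ i : Fin n, wt K (k + 1) i * ∑ l, b i l * (w l - w i) := by
  set c := wt K (k + 1) with hc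
  set W : ℕ → ℝ := fun r => w ⟨min r (n - 1), by omega⟩ with hW
  have hWm : Monotone W := fun p q hpq => hw (by simp only [Fin.mk_le_mk]; omega)
  have hWw : ∀ i : Fin n, w i = W i := by
    intro i; simp only [hW]; congr 1; ext; simp; omega
  have hlayer : ∀ l : Fin n, w l = W 0 + ∑ r ∈ range n, if r < l.val then W (r + 1) - W r else 0 := by
    intro l
    rw [hWw l, ← Finset.sum_filter]
    have : (range n).filter (fun r => r < l.val) = range l.val := by
      ext r; simp; omega
    rw [this, Finset.sum_range_sub]; ring
  set cut : ℕ → ℝ := fun r => ∑ i : Fin n with i.val ≤ r, ∑ l : Fin n with ¬ l.val ≤ r, (c i * b i l - c l * b l i)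
    with hcutdef
  have hmain : ∑ i : Fin n, c i * ∑ l, b i l * (w l - w i) =
      ∑ r ∈ range n, (W (r + 1) - W r) * cut r := by
    have e1 : ∀ i l : Fin n, w l - w i = ∑ r ∈ range n, (W (r + 1) - W r) *
        ((if r < l.val then (1:ℝ) else 0) - (if r < i.val then 1 else 0)) := by
      intro i l
      rw [hlayer l, hlayer i, add_sub_add_left_eq_sub, ← Finset.sum_sub_distrib]
      refine Finset.sum_congr rfl fun r _ => ?_
      split_ifs <;> ring
    have e2 : ∀ r, cut r = ∑ i : Fin n, ∑ l : Fin n, c i * b i l *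
        ((if r < l.val then (1:ℝ) else 0) - (if r < i.val then 1 else 0)) := by
      intro r
      have e3 : cut r = (∑ i : Fin n, ∑ l : Fin n, if i.val ≤ r ∧ ¬ l.val ≤ r then c i * b i l else 0)
          - ∑ i : Fin n, ∑ l : Fin n, if i.val ≤ r ∧ ¬ l.val ≤ r then c l * b l i else 0 := by
        simp only [hcutdef, Finset.sum_filter, ← Finset.sum_sub_distrib]
        refine Finset.sum_congr rfl fun i _ => ?_
        split_ifs with h
        · refine Finset.sum_congr rfl fun l _ => ?_
          by_cases h2 : l.val ≤ r <;> simp [h, h2]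
        · simp [h]
      rw [e3, Finset.sum_comm (f := fun (i l : Fin n) => if i.val ≤ r ∧ ¬ l.val ≤ r then c l * b l i else 0),
        ← Finset.sum_sub_distrib]
      refine Finset.sum_congr rfl fun i _ => ?_
      rw [← Finset.sum_sub_distrib]
      refine Finset.sum_congr rfl fun l _ => ?_
      by_cases h1 : i.val ≤ r <;> by_cases h2 : l.val ≤ r <;>
        simp [h1, h2, not_lt.2, not_le.1]
    simp only [e2, Finset.mul_sum]
    rw [Finset.sum_comm (s := range n)]
    refine Finset.sum_congr rfl fun i _ => ?_
    rw [Finset.sum_comm (s := range n)]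
    refine Finset.sum_congr rfl fun l _ => ?_
    rw [e1 i l, Finset.mul_sum, Finset.mul_sum]
    exact Finset.sum_congr rfl fun r _ => by ring
  have hlow : ∀ r, (c r - K * c (r + 1)) * (∑ i : Fin n with i.val ≤ r, ∑ l : Fin n with ¬ l.val ≤ r, b i l)
      ≤ cut r := by
    intro r
    have h1 : c r * (∑ i : Fin n with i.val ≤ r, ∑ l : Fin n with ¬ l.val ≤ r, b i l) ≤
        ∑ i : Fin n with i.val ≤ r, ∑ l : Fin n with ¬ l.val ≤ r, c i * b i l := by
      simp only [Finset.mul_sum]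
      refine Finset.sum_le_sum fun i hi => Finset.sum_le_sum fun l _ => ?_
      exact mul_le_mul_of_nonneg_right (wt_anti hK _ (by simpa using hi)) (hb _ _)
    have h2 : ∑ i : Fin n with i.val ≤ r, ∑ l : Fin n with ¬ l.val ≤ r, c l * b l i ≤
        c (r + 1) * (∑ i : Fin n with i.val ≤ r, ∑ l : Fin n with ¬ l.val ≤ r, b l i) := by
      simp only [Finset.mul_sum]
      refine Finset.sum_le_sum fun i hi => Finset.sum_le_sum fun l hl => ?_
      have : r < l.val := by simpa using hl
      exact mul_le_mul_of_nonneg_right (wt_anti hK _ this) (hb _ _)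
    have h3 := mul_le_mul_of_nonneg_left (hcut r) (wt_nonneg hK (k + 1) (r + 1))
    have h4 : cut r = (∑ i : Fin n with i.val ≤ r, ∑ l : Fin n with ¬ l.val ≤ r, c i * b i l) -
        ∑ i : Fin n with i.val ≤ r, ∑ l : Fin n with ¬ l.val ≤ r, c l * b l i := by
      simp only [hcutdef, Finset.sum_sub_distrib]
    rw [h4]
    rw [← hc] at h3
    linarith
  have hbs : ∀ r : ℕ, 0 ≤ ∑ i : Fin n with i.val ≤ r, ∑ l : Fin n with ¬ l.val ≤ r, b i l :=
    fun r => Finset.sum_nonneg fun i _ => Finset.sum_nonneg fun l _ => hb i l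
  have hcut0 : ∀ r, 0 ≤ cut r := fun r => le_trans
    (mul_nonneg (sub_nonneg.2 (wt_ratio hK _ _)) (hbs r)) (hlow r)
  rw [hmain]
  have hsingle := Finset.single_le_sum (f := fun r => (W (r + 1) - W r) * cut r)
    (fun r _ => mul_nonneg (sub_nonneg.2 (hWm (Nat.le_succ r))) (hcut0 r))
    (Finset.mem_range.2 (by omega : k < n))
  refine le_trans ?_ hsingle
  have hck : c k - K * c (k + 1) = K⁻¹ ^ k := by simp [hc, wt]
  have h5 := hlow k
  rw [hck] at h5
  have h6 := mul_le_mul_of_nonneg_left h5 (sub_nonneg.2 (hWm (Nat.le_succ k)))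
  rw [hWw ⟨k + 1, hk⟩, hWw ⟨k, by omega⟩]
  calc _ = (W (k + 1) - W k) *
        (K⁻¹ ^ k * ∑ i : Fin n with i.val ≤ k, ∑ l : Fin n with ¬ l.val ≤ k, b i l) := by ring
    _ ≤ _ := h6

/-! ### Weighted sorted sums -/

/-- `sortSum K k y = y₍₁₎ + K⁻¹ y₍₂₎ + ⋯ + K^{-(k-1)} y₍ₖ₎`, where `y₍₁₎ ≤ y₍₂₎ ≤ ⋯` are the
entries of `y` in increasing order. -/
noncomputable def sortSum {n : ℕ} (K : ℝ) (k : ℕ) (y : Fin n → ℝ) : ℝ :=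
  ∑ i : Fin n, wt K k i * y (Tuple.sort y i)

/-- Rearrangement: pairing the decreasing weights with the increasingly sorted entries minimises the
sum, so `sortSum` is the minimum of finitely many linear functions. -/
lemma sortSum_le {n : ℕ} {K : ℝ} (hK : 1 ≤ K) (k : ℕ) (y : Fin n → ℝ) (π : Equiv.Perm (Fin n)) :
    sortSum K k y ≤ ∑ i : Fin n, wt K k i * y (π i) := by
  have hav : Antivary (fun i : Fin n => wt K k i) (y ∘ Tuple.sort y) := by
    have h1 : Antitone (fun i : Fin n => wt K k i) := fun _ _ hij => wt_anti hK k hij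
    exact h1.antivary (Tuple.monotone_sort y)
  have := hav.sum_mul_le_sum_mul_comp_perm (σ := π.trans (Tuple.sort y).symm)
  simpa [sortSum] using this

lemma sortSum_succ {n : ℕ} (K : ℝ) (k : ℕ) (hk : k < n) (y : Fin n → ℝ) :
    sortSum K (k + 1) y = sortSum K k y + K⁻¹ ^ k * y (Tuple.sort y ⟨k, hk⟩) := by
  have : ∀ i : Fin n, wt K (k + 1) i = wt K k i + if i = ⟨k, hk⟩ then K⁻¹ ^ k else 0 := by
    intro i
    unfold wt
    by_cases h : i = ⟨k, hk⟩
    · subst h; simp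
    · have : i.val ≠ k := fun h' => h (Fin.ext h')
      simp only [h, if_false, add_zero]
      congr 1
      simp; omega
  simp only [sortSum, this, add_mul, Finset.sum_add_distrib]
  simp

lemma sortSum_nonneg {n : ℕ} {K : ℝ} (hK : 1 ≤ K) (k : ℕ) {y : Fin n → ℝ} (hy : ∀ i, 0 ≤ y i) :
    0 ≤ sortSum K k y :=
  Finset.sum_nonneg fun i _ => mul_nonneg (wt_nonneg hK _ _) (hy _)

lemma sortSum_one {n : ℕ} (K : ℝ) (hn : 0 < n) (y : Fin n → ℝ) :
    sortSum K 1 y = y (Tuple.sort y ⟨0, hn⟩) := by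
  have h0 : sortSum K 0 y = 0 := by simp [sortSum, wt]
  have := sortSum_succ K 0 hn y
  simpa [h0] using this

lemma sortSum_one_le {n : ℕ} (K : ℝ) (hn : 0 < n) (y : Fin n → ℝ) (i : Fin n) :
    sortSum K 1 y ≤ y i := by
  rw [sortSum_one K hn]
  have := Tuple.monotone_sort y (show (⟨0, hn⟩ : Fin n) ≤ (Tuple.sort y).symm i from Nat.zero_le _)
  simpa using this

/-! ### Growth along trajectories -/

lemma IsTrajectory.incr {n : ℕ} {a : Fin n → Fin n → ℝ → ℝ} {z : ℝ → Fin n → ℝ}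
    (hz : IsTrajectory n a z) {s t : ℝ} (hs : 0 ≤ s) (hst : s ≤ t) (i : Fin n) :
    IntervalIntegrable (fun u => ∑ j, a i j u * (z u j - z u i)) volume s t ∧
      z t i = z s i + ∫ u in s..t, ∑ j, a i j u * (z u j - z u i) := by
  obtain ⟨h1, h2⟩ := hz.2 i s hs
  obtain ⟨h3, h4⟩ := hz.2 i t (hs.trans hst)
  have h5 := h1.symm.trans h3
  refine ⟨h5, ?_⟩
  rw [h4, h2, add_assoc, intervalIntegral.integral_add_adjacent_intervals h1 h5]

lemma sortSum_growth {n : ℕ} {a : Fin n → Fin n → ℝ → ℝ} {z : ℝ → Fin n → ℝ}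
    (hz : IsTrajectory n a z) {K : ℝ} (hK : 1 ≤ K) (k : ℕ) {s t : ℝ} (hs : 0 ≤ s) (hst : s ≤ t)
    (h : ℝ → ℝ) (hh : IntervalIntegrable h volume s t)
    (hE : ∀ u ∈ Set.Icc s t, h u ≤ ∑ i : Fin n, wt K k i *
      ∑ l, a (Tuple.sort (z u) i) l u * (z u l - z u (Tuple.sort (z u) i))) :
    sortSum K k (z s) + ∫ u in s..t, h u ≤ sortSum K k (z t) := by
  refine envelope_growth (ι := Equiv.Perm (Fin n)) hst
    (fun π u => ∑ i : Fin n, wt K k i * z u (π i))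
    (fun π u => ∑ i : Fin n, wt K k i * ∑ l, a (π i) l u * (z u l - z u (π i)))
    h (fun u => sortSum K k (z u)) ?_ hh ?_ (fun π u _ => sortSum_le hK k (z u) π)
    (fun u hu => ⟨Tuple.sort (z u), rfl, hE u hu⟩)
  · intro π
    have := IntervalIntegrable.sum (μ := volume) (a := s) (b := t) Finset.univ
      (f := fun i : Fin n => fun u => wt K k i * ∑ l, a (π i) l u * (z u l - z u (π i)))
      (fun i _ => (hz.incr hs hst (π i)).1.const_mul _)
    refine (congrArg (fun φ => IntervalIntegrable φ volume s t) ?_).mp this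
    ext u; simp
  · intro π u hu
    rw [intervalIntegral.integral_finsetSum
      (fun i _ => (hz.incr hs hu.1 (π i)).1.const_mul _), ← Finset.sum_add_distrib]
    refine Finset.sum_congr rfl fun i _ => ?_
    rw [intervalIntegral.integral_const_mul, ← mul_add, ← (hz.incr hs hu.1 (π i)).2]

/-- Cut balance at every nonnegative time. -/
def CutBalanced (n : ℕ) (a : Fin n → Fin n → ℝ → ℝ) (K : ℝ) : Prop :=
  ∀ S : Finset (Fin n), S.Nonempty → S ≠ Finset.univ → ∀ t : ℝ, 0 ≤ t →
    K⁻¹ * (∑ i ∈ S, ∑ j ∈ Sᶜ, a j i t) ≤ ∑ i ∈ S, ∑ j ∈ Sᶜ, a i j t ∧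
    ∑ i ∈ S, ∑ j ∈ Sᶜ, a i j t ≤ K * (∑ i ∈ S, ∑ j ∈ Sᶜ, a j i t)

lemma CutBalanced.le {n : ℕ} {a : Fin n → Fin n → ℝ → ℝ} {K : ℝ} (hcb : CutBalanced n a K)
    (hK : 1 ≤ K) (S : Finset (Fin n)) {t : ℝ} (ht : 0 ≤ t) :
    ∑ i ∈ S, ∑ j ∈ Sᶜ, a j i t ≤ K * ∑ i ∈ S, ∑ j ∈ Sᶜ, a i j t := by
  rcases S.eq_empty_or_nonempty with rfl | hS
  · simp
  by_cases hu : S = Finset.univ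
  · subst hu; simp
  have := (hcb S hS hu t ht).1
  rwa [inv_mul_le_iff₀ (by linarith)] at this

/-- A cut sum over the image of `{i | p i}` under `σ`, reindexed by `σ`. -/
lemma sum_cut_map {n : ℕ} (σ : Equiv.Perm (Fin n)) (p : Fin n → Prop) [DecidablePred p]
    (f : Fin n → Fin n → ℝ) :
    ∑ i ∈ (Finset.univ.filter p).map σ.toEmbedding,
        ∑ j ∈ ((Finset.univ.filter p).map σ.toEmbedding)ᶜ, f i j =
      ∑ i with p i, ∑ l with ¬ p l, f (σ i) (σ l) := by
  have : ((Finset.univ.filter p).map σ.toEmbedding)ᶜ =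
      (Finset.univ.filter fun l => ¬ p l).map σ.toEmbedding := by
    ext j
    simp only [Finset.mem_compl, Finset.mem_map_equiv, Finset.mem_filter, Finset.mem_univ, true_and]
  rw [this]
  simp only [Finset.sum_map, Equiv.coe_toEmbedding]

/-- Lower bound for the instantaneous drift of the weighted sorted sum: the contribution of the gap
between the `(k+1)`-st and `(k+2)`-nd values. -/
lemma drift_lower {n : ℕ} {a : Fin n → Fin n → ℝ → ℝ} (ha : IsWeight n a) {K : ℝ} (hK : 1 ≤ K)
    (hcb : CutBalanced n a K) {u : ℝ} (hu : 0 ≤ u) (y : Fin n → ℝ) (k : ℕ) (hk : k + 1 < n) :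
    K⁻¹ ^ k * (y (Tuple.sort y ⟨k + 1, hk⟩) - y (Tuple.sort y ⟨k, by omega⟩)) *
        (∑ i : Fin n with i.val ≤ k, ∑ l : Fin n with ¬ l.val ≤ k,
          a (Tuple.sort y i) (Tuple.sort y l) u) ≤
      ∑ i : Fin n, wt K (k + 1) i *
        ∑ l, a (Tuple.sort y i) l u * (y l - y (Tuple.sort y i)) := by
  have := sorted_drift hK (y ∘ Tuple.sort y) (Tuple.monotone_sort y)
    (fun i l => a (Tuple.sort y i) (Tuple.sort y l) u) (fun i j => (ha _ _).1 u) ?_ k hk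
  · refine this.trans (le_of_eq ?_)
    refine Finset.sum_congr rfl fun i _ => ?_
    congr 1
    exact Equiv.sum_comp (Tuple.sort y)
      (fun l => a (Tuple.sort y i) l u * (y l - y (Tuple.sort y i)))
  · intro r
    have h := hcb.le hK ((Finset.univ.filter fun i : Fin n => i.val ≤ r).map
      (Tuple.sort y).toEmbedding) hu
    rwa [sum_cut_map (Tuple.sort y) (fun i : Fin n => i.val ≤ r) (fun i j => a j i u),
      sum_cut_map (Tuple.sort y) (fun i : Fin n => i.val ≤ r) (fun i j => a i j u)] at h

lemma sortSum_mono {n : ℕ} {a : Fin n → Fin n → ℝ → ℝ} (ha : IsWeight n a) {z : ℝ → Fin n → ℝ}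
    (hz : IsTrajectory n a z) {K : ℝ} (hK : 1 ≤ K) (hcb : CutBalanced n a K) (k : ℕ)
    (hk : k + 1 < n) {s t : ℝ} (hs : 0 ≤ s) (hst : s ≤ t) :
    sortSum K (k + 1) (z s) ≤ sortSum K (k + 1) (z t) := by
  have := sortSum_growth hz hK (k + 1) hs hst (fun _ => 0) (by simp) ?_
  · simpa using this
  intro u hu
  refine le_trans ?_ (drift_lower ha hK hcb (hs.trans hu.1) (z u) k hk)
  have hm := Tuple.monotone_sort (z u)
    (show (⟨k, by omega⟩ : Fin n) ≤ ⟨k + 1, hk⟩ from Nat.le_succ k)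
  refine mul_nonneg (mul_nonneg (by positivity) (sub_nonneg.2 hm)) ?_
  exact Finset.sum_nonneg fun i _ => Finset.sum_nonneg fun l _ => (ha _ _).1 u

/-- Lower bounds persist, as the minimum of the values, `sortSum K 1`, is nondecreasing. -/
lemma traj_ge {n : ℕ} (hn : 2 ≤ n) {a : Fin n → Fin n → ℝ → ℝ} (ha : IsWeight n a)
    {z : ℝ → Fin n → ℝ} (hz : IsTrajectory n a z) {K : ℝ} (hK : 1 ≤ K) (hcb : CutBalanced n a K)
    {s t : ℝ} (hs : 0 ≤ s) (hst : s ≤ t) {c : ℝ} (h : ∀ i, c ≤ z s i) (i : Fin n) : c ≤ z t i := by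
  calc c ≤ sortSum K 1 (z s) := by rw [sortSum_one K (by omega)]; exact h _
    _ ≤ sortSum K 1 (z t) := sortSum_mono ha hz hK hcb 0 (by omega) hs hst
    _ ≤ z t i := sortSum_one_le K (by omega) _ _

lemma IsWeight.intervalIntegrable {n : ℕ} {a : Fin n → Fin n → ℝ → ℝ} (ha : IsWeight n a)
    (i j : Fin n) (s t : ℝ) : IntervalIntegrable (a i j) volume s t :=
  ((ha i j).2.2 s).symm.trans ((ha i j).2.2 t)

lemma IsWeight.cut_integrable {n : ℕ} {a : Fin n → Fin n → ℝ → ℝ} (ha : IsWeight n a)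
    (S T : Finset (Fin n)) (s t : ℝ) :
    IntervalIntegrable (fun u => ∑ i ∈ S, ∑ j ∈ T, a i j u) volume s t := by
  have := IntervalIntegrable.sum (μ := volume) (a := s) (b := t) S
    (f := fun i => ∑ j ∈ T, a i j)
    (fun i _ => IntervalIntegrable.sum T fun j _ => ha.intervalIntegrable i j s t)
  refine (congrArg (fun φ => IntervalIntegrable φ volume s t) ?_).mp this
  ext u; simp

lemma IsWeight.cutSum_eq {n : ℕ} {a : Fin n → Fin n → ℝ → ℝ} (ha : IsWeight n a)
    (S : Finset (Fin n)) (s t : ℝ) :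
    cutSum n a S s t = ∫ u in s..t, ∑ i ∈ S, ∑ j ∈ Sᶜ, a i j u := by
  unfold cutSum
  rw [intervalIntegral.integral_finsetSum]
  · refine Finset.sum_congr rfl fun i _ => ?_
    rw [intervalIntegral.integral_finsetSum]
    exact fun j _ => ha.intervalIntegrable i j s t
  · intro i _
    simpa using ha.cut_integrable {i} Sᶜ s t

/-- A group `S` above level `δ ≥ 0` loses at most `δ` times the interaction it receives from outside,
because its lowest agent is pulled down only by agents outside `S`, which are nonnegative. -/
lemma upper_persist {n : ℕ} {a : Fin n → Fin n → ℝ → ℝ} (ha : IsWeight n a)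
    {z : ℝ → Fin n → ℝ} (hz : IsTrajectory n a z) {s t : ℝ} (hs : 0 ≤ s) (hst : s ≤ t)
    (hz0 : ∀ u ∈ Set.Icc s t, ∀ i, 0 ≤ z u i) (S : Finset (Fin n)) {δ : ℝ} (hδ : 0 ≤ δ)
    (hS : ∀ i ∈ S, δ ≤ z s i) {i : Fin n} (hi : i ∈ S) :
    δ - δ * ∫ u in s..t, ∑ i ∈ S, ∑ j ∈ Sᶜ, a i j u ≤ z t i := by
  classical
  let f : Option S → ℝ → ℝ := fun o u => o.elim δ (fun i => z u i)
  let g : Option S → ℝ → ℝ := fun o u => o.elim 0 (fun i => ∑ j, a i j u * (z u j - z u i))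
  have main := envelope_growth (ι := Option S) hst f g
    (fun u => - δ * ∑ i ∈ S, ∑ j ∈ Sᶜ, a i j u)
    (fun u => Finset.univ.inf' Finset.univ_nonempty (fun o => f o u)) ?_ ?_ ?_ ?_ ?_
  · have h1 : Finset.univ.inf' Finset.univ_nonempty (fun o => f o t) ≤ z t i :=
      Finset.inf'_le (fun o => f o t) (Finset.mem_univ (some (⟨i, hi⟩ : S)))
    have h2 : δ ≤ Finset.univ.inf' Finset.univ_nonempty (fun o => f o s) := by
      refine Finset.le_inf' _ _ ?_
      rintro (_ | j) _
      · exact le_rfl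
      · exact hS j j.2
    rw [intervalIntegral.integral_const_mul] at main
    linarith
  · rintro (_ | j)
    · exact intervalIntegrable_const
    · exact (hz.incr hs hst j).1
  · exact (ha.cut_integrable S Sᶜ s t).const_mul _
  · rintro (_ | j) u hu
    · simp [f, g]
    · exact (hz.incr hs hu.1 j).2
  · intro o u _
    exact Finset.inf'_le (fun o => f o u) (Finset.mem_univ o)
  · intro u hu
    obtain ⟨o, -, ho⟩ := Finset.exists_mem_eq_inf' Finset.univ_nonempty (fun o => f o u)
    refine ⟨o, ho, ?_⟩
    have hmin : ∀ o', f o u ≤ f o' u := fun o' => by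
      rw [← ho]; exact Finset.inf'_le (fun o => f o u) (Finset.mem_univ o')
    have hR : ∀ i, 0 ≤ ∑ j ∈ Sᶜ, a i j u := fun i => Finset.sum_nonneg fun j _ => (ha _ _).1 u
    rcases o with _ | j
    · have : 0 ≤ δ * ∑ i ∈ S, ∑ j ∈ Sᶜ, a i j u :=
        mul_nonneg hδ (Finset.sum_nonneg fun i _ => hR i)
      simp only [g, Option.elim]; linarith
    · have hj : z u j ≤ δ := hmin none
      have hjj : ∀ l ∈ S, z u j ≤ z u l := fun l hl => hmin (some ⟨l, hl⟩)
      have e1 : δ * ∑ l ∈ Sᶜ, a j l u ≤ δ * ∑ i ∈ S, ∑ j ∈ Sᶜ, a i j u :=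
        mul_le_mul_of_nonneg_left
          (Finset.single_le_sum (f := fun i => ∑ j ∈ Sᶜ, a i j u) (fun i _ => hR i) j.2) hδ
      have e2 : 0 ≤ ∑ l ∈ S, a j l u * (z u l - z u j) :=
        Finset.sum_nonneg fun l hl => mul_nonneg ((ha _ _).1 u) (sub_nonneg.2 (hjj l hl))
      have e3 : - δ * ∑ l ∈ Sᶜ, a j l u ≤ ∑ l ∈ Sᶜ, a j l u * (z u l - z u j) := by
        rw [Finset.mul_sum]
        refine Finset.sum_le_sum fun l _ => ?_
        have h1 := (ha j l).1 u
        have h2 := hz0 u hu l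
        nlinarith
      have e4 := Finset.sum_add_sum_compl S (fun l => a j l u * (z u l - z u j))
      simp only [g, Option.elim]
      linarith

/-! ### The cascade step -/

/-- One step of the cascade. If the bottom `k + 1` agents carry little of `A`, then the `(k+2)`-nd
value is at least `δ ≈ K ^ (k+1) A / 2` at time `s`. Until the bottom agents have received the amount
`1 / (2K)` of interaction from the upper group, cut balance keeps that group above `δ / 2`; the bottom
group therefore does not change and its weighted sum gains at least `A / 16`. -/
lemma step {n : ℕ} (hn : 2 ≤ n) {a : Fin n → Fin n → ℝ → ℝ} (ha : IsWeight n a)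
    {z : ℝ → Fin n → ℝ} (hz : IsTrajectory n a z) {K : ℝ} (hK : 1 ≤ K) (hcb : CutBalanced n a K)
    {s t : ℝ} (hs : 0 ≤ s) (hst : s ≤ t) (hz0 : ∀ i, 0 ≤ z s i)
    (hcut : ∀ S : Finset (Fin n), S.Nonempty → S ≠ Finset.univ → 1 ≤ cutSum n a S s t)
    (k : ℕ) (hk : k + 1 < n) {A : ℝ} (hA : 0 ≤ A) (hsA : A ≤ sortSum K (k + 2) (z s)) :
    A / 16 ≤ sortSum K (k + 1) (z t) := by
  by_contra! hlt
  have hK0 : 0 < K := by linarith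
  have hzu : ∀ u, s ≤ u → ∀ i, 0 ≤ z u i := fun u hu => traj_ge hn ha hz hK hcb hs hu hz0
  have hVu : ∀ u ∈ Set.Icc s t, sortSum K (k + 1) (z u) < A / 16 := fun u hu =>
    (sortSum_mono ha hz hK hcb k hk (hs.trans hu.1) hu.2).trans_lt hlt
  set p : ℝ := K⁻¹ ^ k with hp
  have hp0 : 0 < p := by positivity
  -- the level of the upper group at time `s`
  set δ : ℝ := K * p⁻¹ * (A / 2) with hδdef
  have hδ : 0 ≤ δ := by positivity
  have hpδ : p * δ = K * (A / 2) := by rw [hδdef]; field_simp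
  have hpK : K⁻¹ ^ (k + 1) = p * K⁻¹ := pow_succ _ _
  have hwk : δ ≤ z s (Tuple.sort (z s) ⟨k + 1, hk⟩) := by
    have h1 := sortSum_succ K (k + 1) hk (z s)
    have h2 := hVu s ⟨le_rfl, hst⟩
    have h3 : A / 2 ≤ p * K⁻¹ * z s (Tuple.sort (z s) ⟨k + 1, hk⟩) := by
      rw [← hpK]; linarith
    have h4 := mul_le_mul_of_nonneg_left h3 hK0.le
    have h5 : K * (p * K⁻¹ * z s (Tuple.sort (z s) ⟨k + 1, hk⟩)) =
      p * z s (Tuple.sort (z s) ⟨k + 1, hk⟩) := by field_simp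
    rw [h5, ← hpδ] at h4
    exact le_of_mul_le_mul_left h4 hp0
  -- throughout, the `k + 1` smallest values stay below `δ / 8`
  have hlow : ∀ u ∈ Set.Icc s t, z u (Tuple.sort (z u) ⟨k, by omega⟩) < δ / 8 := by
    intro u hu
    have h1 := sortSum_succ K k (by omega) (z u)
    have h2 := hVu u hu
    have h3 := sortSum_nonneg hK k (hzu u hu.1)
    have h4 : p * z u (Tuple.sort (z u) ⟨k, by omega⟩) < p * (δ / 8) := by
      have : A ≤ K * A := by nlinarith
      calc _ < A / 16 := by linarith
        _ ≤ K * (A / 2) / 8 := by linarith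
        _ = p * (δ / 8) := by rw [← hpδ]; ring
    exact lt_of_mul_lt_mul_left h4 hp0.le
  let low (σ : Equiv.Perm (Fin n)) : Finset (Fin n) :=
    (Finset.univ.filter fun i : Fin n => i.val ≤ k).map σ.toEmbedding
  have hlowmem : ∀ σ i, i ∈ low σ ↔ (σ.symm i).val ≤ k := by
    intro σ i; simp [low, Finset.mem_map_equiv]
  set T := low (Tuple.sort (z s)) with hT
  have hTne : T.Nonempty := ⟨Tuple.sort (z s) ⟨0, by omega⟩, by simp [hT, hlowmem]⟩
  have hTu : T ≠ Finset.univ := by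
    intro h
    have : Tuple.sort (z s) ⟨k + 1, hk⟩ ∈ T := by rw [h]; exact Finset.mem_univ _
    rw [hT, hlowmem] at this
    simp at this
  have hTc : ∀ i ∈ Tᶜ, δ ≤ z s i := by
    intro i hi
    rw [Finset.mem_compl, hT, hlowmem, not_le] at hi
    have := Tuple.monotone_sort (z s)
      (show (⟨k + 1, hk⟩ : Fin n) ≤ (Tuple.sort (z s)).symm i from hi)
    simp only [Function.comp, Equiv.apply_symm_apply] at this
    exact hwk.trans this
  set c : ℝ → ℝ := fun u => ∑ i ∈ T, ∑ j ∈ Tᶜ, a i j u with hc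
  have hcint : ∀ u v, IntervalIntegrable c volume u v := ha.cut_integrable T Tᶜ
  have hc0 : ∀ u, 0 ≤ c u := fun u =>
    Finset.sum_nonneg fun i _ => Finset.sum_nonneg fun j _ => (ha i j).1 u
  -- stop when the lower group has received the amount `1 / (2K)` of interaction
  obtain ⟨τ, hτ, hCτ⟩ : ∃ τ ∈ Set.Icc s t, ∫ u in s..τ, c u = (2 * K)⁻¹ := by
    have hcont : ContinuousOn (fun v => ∫ u in s..v, c u) (Set.Icc s t) :=
      (intervalIntegral.continuous_primitive hcint s).continuousOn
    have h1 := hcut T hTne hTu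
    rw [ha.cutSum_eq] at h1
    have h2 : (2 * K)⁻¹ ≤ 1 := inv_le_one_of_one_le₀ (by linarith)
    exact intermediate_value_Icc hst hcont ⟨by simp; positivity, h2.trans h1⟩
  have hup : ∀ u ∈ Set.Icc s τ, ∀ i ∈ Tᶜ, δ / 2 ≤ z u i := by
    intro u hu i hi
    have h1 := upper_persist ha hz hs hu.1 (fun v hv => hzu v hv.1) Tᶜ hδ hTc hi
    have h2 : ∫ v in s..u, ∑ i ∈ Tᶜ, ∑ j ∈ Tᶜᶜ, a i j v ≤ ∫ v in s..u, K * c v := by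
      refine intervalIntegral.integral_mono_on hu.1 (ha.cut_integrable _ _ _ _)
        ((hcint _ _).const_mul _) ?_
      intro v hv
      rw [compl_compl, Finset.sum_comm]
      exact hcb.le hK T (hs.trans hv.1)
    rw [intervalIntegral.integral_const_mul] at h2
    have h3 : ∫ v in s..u, c v ≤ ∫ v in s..τ, c v :=
      intervalIntegral.integral_mono_interval le_rfl hu.1 hu.2
        (Filter.Eventually.of_forall hc0) (hcint _ _)
    rw [hCτ] at h3
    have h4 : K * ∫ v in s..u, c v ≤ 1 / 2 := by
      calc _ ≤ K * (2 * K)⁻¹ := mul_le_mul_of_nonneg_left h3 hK0.le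
        _ = 1 / 2 := by field_simp
    have h5 := mul_le_mul_of_nonneg_left (h2.trans h4) hδ
    linarith
  have hgrow := sortSum_growth hz hK (k + 1) hs hτ.1 (fun u => p * (δ / 4) * c u)
    ((hcint _ _).const_mul _) ?_
  · rw [intervalIntegral.integral_const_mul, hCτ] at hgrow
    have h1 := sortSum_nonneg hK (k + 1) hz0
    have h2 := hVu τ hτ
    have h3 : p * (δ / 4) * (2 * K)⁻¹ = A / 16 := by
      rw [← mul_div_assoc, hpδ]; field_simp; ring
    linarith
  · intro u hu
    have hut : u ∈ Set.Icc s t := ⟨hu.1, hu.2.trans hτ.2⟩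
    refine le_trans ?_ (drift_lower ha hK hcb (hs.trans hu.1) (z u) k hk)
    -- before the stopping time the `k + 1` lowest agents are those of `T`
    have hTeq : low (Tuple.sort (z u)) = T := by
      refine Finset.eq_of_subset_of_card_le ?_ (by simp [hT, low])
      intro i hi
      by_contra hiT
      have h1 := hup u hu i (Finset.mem_compl.2 hiT)
      rw [hlowmem] at hi
      have h2 := Tuple.monotone_sort (z u)
        (show (Tuple.sort (z u)).symm i ≤ (⟨k, by omega⟩ : Fin n) from hi)
      simp only [Function.comp, Equiv.apply_symm_apply] at h2
      have h3 := hlow u hut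
      linarith
    have hsum : (∑ i : Fin n with i.val ≤ k, ∑ l : Fin n with ¬ l.val ≤ k,
        a (Tuple.sort (z u) i) (Tuple.sort (z u) l) u) = c u := by
      rw [← sum_cut_map (Tuple.sort (z u)) (fun i : Fin n => i.val ≤ k) (fun i j => a i j u)]
      simp only [hc, ← hTeq, low]
    rw [hsum]
    refine mul_le_mul_of_nonneg_right (mul_le_mul_of_nonneg_left ?_ hp0.le) (hc0 u)
    have h1 : Tuple.sort (z u) ⟨k + 1, hk⟩ ∈ Tᶜ := by
      rw [Finset.mem_compl, ← hTeq, hlowmem]; simp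
    have h2 := hup u hu _ h1
    have h3 := hlow u hut
    linarith

/-! ### Existence of the rescaling times -/

lemma cutSum_continuous {n : ℕ} {a : Fin n → Fin n → ℝ → ℝ} (ha : IsWeight n a)
    (S : Finset (Fin n)) (s : ℝ) : Continuous (cutSum n a S s) := by
  have : cutSum n a S s = fun t => ∫ u in s..t, ∑ i ∈ S, ∑ j ∈ Sᶜ, a i j u := by
    ext t; exact ha.cutSum_eq S s t
  rw [this]
  exact intervalIntegral.continuous_primitive (ha.cut_integrable S Sᶜ) s

lemma edge_unbounded {n : ℕ} {a : Fin n → Fin n → ℝ → ℝ} (ha : IsWeight n a) (i j : Fin n)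
    (h : ∫⁻ s in Set.Ioi (0:ℝ), ENNReal.ofReal (a i j s) = ⊤) (s : ℝ) :
    ∃ t, s ≤ t ∧ 1 ≤ ∫ u in s..t, a i j u := by
  by_contra! hcon
  have hint : IntegrableOn (a i j) (Set.Ioi (0:ℝ)) volume := by
    refine integrableOn_Ioi_of_intervalIntegral_norm_bounded (l := atTop) (b := id)
      ((∫ u in (0:ℝ)..s, a i j u) + 1) 0 (fun t => ?_) tendsto_id ?_
    · have := (ha.intervalIntegrable i j 0 t).1
      simpa using this
    · filter_upwards [eventually_ge_atTop s] with t ht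
      have h1 := hcon t ht
      have h2 := intervalIntegral.integral_add_adjacent_intervals
        (ha.intervalIntegrable i j 0 s) (ha.intervalIntegrable i j s t)
      have h3 : ∀ u, ‖a i j u‖ = a i j u := fun u => Real.norm_of_nonneg ((ha i j).1 u)
      simp only [h3, id]
      linarith
  have := hint.lintegral_lt_top
  exact this.ne h

/-- A path from outside `p` to inside `p` has an edge entering `p`. -/
lemma exists_cross {α : Type*} {r : α → α → Prop} {u v : α} (h : Relation.ReflTransGen r u v)
    {p : α → Prop} (hu : ¬ p u) (hv : p v) : ∃ x y, ¬ p x ∧ p y ∧ r x y := by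
  induction h with
  | refl => exact absurd hv hu
  | @tail b c _ hbc ih =>
    by_cases hb : p b
    · exact ih hb
    · exact ⟨b, c, hb, hv, hbc⟩

lemma cutSum_mono {n : ℕ} {a : Fin n → Fin n → ℝ → ℝ} (ha : IsWeight n a) (S : Finset (Fin n))
    {s t t' : ℝ} (hst : s ≤ t) (htt : t ≤ t') : cutSum n a S s t ≤ cutSum n a S s t' := by
  refine Finset.sum_le_sum fun i _ => Finset.sum_le_sum fun j _ => ?_
  exact intervalIntegral.integral_mono_interval le_rfl hst htt
    (Filter.Eventually.of_forall (ha i j).1) (ha.intervalIntegrable _ _ _ _)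

lemma cutSum_unbounded {n : ℕ} {a : Fin n → Fin n → ℝ → ℝ} (ha : IsWeight n a)
    (hconn : PersistentConn n a) (S : Finset (Fin n)) (hS : S.Nonempty) (hSu : S ≠ Finset.univ)
    (s : ℝ) : ∃ t, s ≤ t ∧ 1 ≤ cutSum n a S s t := by
  obtain ⟨v, hv⟩ := hS
  obtain ⟨u, hu⟩ : ∃ u, u ∉ S := by
    by_contra! h; exact hSu (Finset.eq_univ_iff_forall.2 h)
  obtain ⟨j, i, hj, hi, hij⟩ := exists_cross (hconn u v) (p := fun w => w ∈ S) hu hv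
  obtain ⟨t, hst, ht⟩ := edge_unbounded ha i j hij s
  refine ⟨t, hst, ht.trans ?_⟩
  have h0 : ∀ i j, 0 ≤ ∫ u in s..t, a i j u := fun i j =>
    intervalIntegral.integral_nonneg hst fun u _ => (ha i j).1 u
  have h1 := Finset.single_le_sum (f := fun j => ∫ u in s..t, a i j u)
    (fun j _ => h0 i j) (Finset.mem_compl.2 hj)
  have h2 := Finset.single_le_sum (f := fun i => ∑ j ∈ Sᶜ, ∫ u in s..t, a i j u)
    (fun i _ => Finset.sum_nonneg fun j _ => h0 i j) hi
  exact le_trans h1 h2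

/-- Under persistent connectivity the infimum defining `nextTime` is over a nonempty closed set, so
it is not a junk value and every cut has accumulated at least `1` at that time. -/
lemma nextTime_spec {n : ℕ} (hn : 2 ≤ n) {a : Fin n → Fin n → ℝ → ℝ} (ha : IsWeight n a)
    (hconn : PersistentConn n a) (s : ℝ) :
    s ≤ nextTime n a s ∧ ∀ S : Finset (Fin n), S.Nonempty → S ≠ Finset.univ →
      1 ≤ cutSum n a S s (nextTime n a s) := by
  classical
  set F : Finset (Finset (Fin n)) :=
    Finset.univ.filter fun S => S.Nonempty ∧ S ≠ Finset.univ with hF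
  have hFne : F.Nonempty := by
    refine ⟨{⟨0, by omega⟩}, ?_⟩
    simp only [hF, Finset.mem_filter, Finset.mem_univ, true_and]
    refine ⟨Finset.singleton_nonempty _, fun h => ?_⟩
    have := congrArg Finset.card h
    simp at this
    omega
  have hmin : ∀ t, minCut n a s t = F.inf' hFne (fun S => cutSum n a S s t) := by
    intro t
    rw [Finset.inf'_eq_csInf_image]
    unfold minCut
    congr 1
    ext y; simp [hF]
  have hcont : Continuous (minCut n a s) := by
    have : minCut n a s = fun t => F.inf' hFne (fun S => cutSum n a S s t) := funext hmin
    rw [this]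
    exact Continuous.finset_inf'_apply hFne fun S _ => cutSum_continuous ha S s
  -- the finitely many cuts all reach `1` before a common time
  have hex : ∀ S ∈ F, ∃ t, s ≤ t ∧ 1 ≤ cutSum n a S s t := by
    intro S hS
    simp only [hF, Finset.mem_filter, Finset.mem_univ, true_and] at hS
    exact cutSum_unbounded ha hconn S hS.1 hS.2 s
  choose! τ hτs hτ using hex
  obtain ⟨t1, ht1, ht1'⟩ : ∃ t1, s ≤ t1 ∧ 1 ≤ minCut n a s t1 := by
    refine ⟨F.sup' hFne τ, ?_, ?_⟩
    · obtain ⟨S, hS⟩ := hFne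
      exact (hτs S hS).trans (Finset.le_sup' τ hS)
    · rw [hmin]
      refine Finset.le_inf' _ _ fun S hS => ?_
      exact (hτ S hS).trans (cutSum_mono ha S (hτs S hS) (Finset.le_sup' τ hS))
  have hs0 : minCut n a s s = 0 := by
    rw [hmin]; simp [cutSum]
  obtain ⟨t2, ht2, ht2'⟩ := intermediate_value_Icc ht1 hcont.continuousOn
    (show (1:ℝ) ∈ Set.Icc (minCut n a s s) (minCut n a s t1) from ⟨by rw [hs0]; norm_num, ht1'⟩)
  have hclosed : IsClosed {t : ℝ | s ≤ t ∧ minCut n a s t = 1} :=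
    (isClosed_le continuous_const continuous_id).inter (isClosed_eq hcont continuous_const)
  have hmem : nextTime n a s ∈ {t : ℝ | s ≤ t ∧ minCut n a s t = 1} :=
    hclosed.csInf_mem ⟨t2, ht2.1, ht2'⟩ ⟨s, fun t ht => ht.1⟩
  refine ⟨hmem.1, fun S hS hSu => ?_⟩
  rw [← hmem.2, hmin]
  exact Finset.inf'_le (fun S => cutSum n a S s (nextTime n a s)) (by simp [hF, hS, hSu])

lemma iterate_ge {n : ℕ} (hn : 2 ≤ n) {a : Fin n → Fin n → ℝ → ℝ} (ha : IsWeight n a)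
    (hconn : PersistentConn n a) (s : ℝ) (q : ℕ) : s ≤ (nextTime n a)^[q] s := by
  induction q with
  | zero => simp
  | succ q ih =>
    rw [Function.iterate_succ_apply']
    exact ih.trans (nextTime_spec hn ha hconn _).1

/-! ### Contraction of the diameter -/

/-- Raising of the minimum over one epoch: if all but at most `⌊n/2⌋` agents start above `δ`, then
after `⌊n/2⌋` steps all agents are above `δ / (16 K) ^ ⌊n/2⌋`. -/
lemma epoch {n : ℕ} (hn : 2 ≤ n) {a : Fin n → Fin n → ℝ → ℝ} (ha : IsWeight n a)
    {z : ℝ → Fin n → ℝ} (hz : IsTrajectory n a z) {K : ℝ} (hK : 1 ≤ K) (hcb : CutBalanced n a K)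
    (hconn : PersistentConn n a) {s : ℝ} (hs : 0 ≤ s) (hz0 : ∀ i, 0 ≤ z s i) {δ : ℝ} (hδ : 0 ≤ δ)
    (hcard : n ≤ n / 2 + #{i | δ ≤ z s i}) (i : Fin n) :
    δ / (16 * K) ^ (n / 2) ≤ z ((nextTime n a)^[n / 2] s) i := by
  set m := n / 2 with hm
  have hm1 : 1 ≤ m := by omega
  have hmn : m < n := by omega
  have hK0 : 0 < K := by linarith
  have hbase : K⁻¹ ^ m * δ ≤ sortSum K (m + 1) (z s) := by
    rw [sortSum_succ K m hmn]
    have h1 := sortSum_nonneg hK m hz0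
    have h2 : δ ≤ z s (Tuple.sort (z s) ⟨m, hmn⟩) := by
      by_contra! hlt
      -- the `m + 1` lowest agents would all miss the level `δ`
      have hsub : (Finset.univ.filter fun i : Fin n => i.val ≤ m).map
          (Tuple.sort (z s)).toEmbedding ⊆ (Finset.univ.filter fun i => δ ≤ z s i)ᶜ := by
        intro j hj
        simp only [Finset.mem_map_equiv, Finset.mem_filter, Finset.mem_univ, true_and] at hj
        have := Tuple.monotone_sort (z s)
          (show (Tuple.sort (z s)).symm j ≤ (⟨m, hmn⟩ : Fin n) from hj)
        simp only [Function.comp, Equiv.apply_symm_apply] at this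
        simp only [Finset.mem_compl, Finset.mem_filter, Finset.mem_univ, true_and, not_le]
        linarith
      have hc := Finset.card_le_card hsub
      rw [Finset.card_map, Finset.card_compl, Fintype.card_fin] at hc
      have : (Finset.univ.filter fun i : Fin n => i.val ≤ m) = Finset.Iic ⟨m, hmn⟩ := by
        ext j; simp [Fin.le_def]
      rw [this, Fin.card_Iic] at hc
      simp only at hc
      omega
    have := mul_le_mul_of_nonneg_left h2 (show 0 ≤ K⁻¹ ^ m by positivity)
    linarith
  have hind : ∀ q ≤ m, K⁻¹ ^ m * δ / 16 ^ q ≤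
      sortSum K (m - q + 1) (z ((nextTime n a)^[q] s)) := by
    intro q
    induction q with
    | zero => intro _; simpa using hbase
    | succ q ih =>
      intro hq
      have h1 := ih (by omega)
      have hsq := iterate_ge hn ha hconn s q
      have hspec := nextTime_spec hn ha hconn ((nextTime n a)^[q] s)
      rw [show m - q + 1 = (m - (q + 1)) + 2 by omega] at h1
      have := step hn ha hz hK hcb (hs.trans hsq) hspec.1
        (traj_ge hn ha hz hK hcb hs hsq hz0) hspec.2 (m - (q + 1)) (by omega) (by positivity) h1
      rw [Function.iterate_succ_apply']
      refine le_trans (le_of_eq ?_) this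
      rw [pow_succ, div_div]
  have h := hind m le_rfl
  simp only [Nat.sub_self, zero_add] at h
  refine le_trans (le_of_eq ?_) (h.trans (sortSum_one_le K (by omega) _ i))
  rw [mul_pow, inv_pow]
  field_simp

lemma IsTrajectory.affine {n : ℕ} {a : Fin n → Fin n → ℝ → ℝ} {x : ℝ → Fin n → ℝ}
    (hx : IsTrajectory n a x) (ε c : ℝ) : IsTrajectory n a (fun t i => ε * x t i + c) := by
  have e : ∀ i s, ∑ j, a i j s * ((ε * x s j + c) - (ε * x s i + c)) =
      ε * ∑ j, a i j s * (x s j - x s i) := by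
    intro i s
    rw [Finset.mul_sum]
    exact Finset.sum_congr rfl fun j _ => by ring
  refine ⟨fun i => (continuousOn_const.mul (hx.1 i)).add continuousOn_const, fun i t ht => ?_⟩
  obtain ⟨h1, h2⟩ := hx.2 i t ht
  simp only [e]
  refine ⟨h1.const_mul ε, ?_⟩
  rw [intervalIntegral.integral_const_mul, h2]
  ring

lemma diam_le {n : ℕ} (hn : 2 ≤ n) (x : ℝ → Fin n → ℝ) (t : ℝ) {lo hi : ℝ}
    (h1 : ∀ i, lo ≤ x t i) (h2 : ∀ i, x t i ≤ hi) : diam n x t ≤ hi - lo := by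
  have : Nonempty (Fin n) := ⟨⟨0, by omega⟩⟩
  exact sub_le_sub (ciSup_le h2) (le_ciInf h1)

lemma diam_mono {n : ℕ} (hn : 2 ≤ n) {a : Fin n → Fin n → ℝ → ℝ} (ha : IsWeight n a)
    {x : ℝ → Fin n → ℝ} (hx : IsTrajectory n a x) {K : ℝ} (hK : 1 ≤ K) (hcb : CutBalanced n a K)
    {s t : ℝ} (hs : 0 ≤ s) (hst : s ≤ t) : diam n x t ≤ diam n x s := by
  refine diam_le hn x t (fun i => ?_) (fun i => ?_)
  · exact traj_ge hn ha hx hK hcb hs hst (fun i => ciInf_le (Set.finite_range _).bddBelow i) i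
  · have := traj_ge hn ha (hx.affine (-1) 0) hK hcb hs hst (c := -(⨆ i, x s i)) (fun i => by
      have := le_ciSup (Set.finite_range (x s)).bddAbove i
      linarith) i
    linarith

lemma diam_contract {n : ℕ} (hn : 2 ≤ n) {a : Fin n → Fin n → ℝ → ℝ} (ha : IsWeight n a)
    {x : ℝ → Fin n → ℝ} (hx : IsTrajectory n a x) {K : ℝ} (hK : 1 ≤ K) (hcb : CutBalanced n a K)
    (hconn : PersistentConn n a) {s : ℝ} (hs : 0 ≤ s) :
    diam n x ((nextTime n a)^[n / 2] s) ≤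
      (1 - 1 / (8 * K * (n:ℝ) ^ 2) ^ (n / 2)) * diam n x s := by
  set t := (nextTime n a)^[n / 2] s with ht
  set lo := ⨅ i, x s i with hlo
  set hi := ⨆ i, x s i with hhi
  have hst : s ≤ t := iterate_ge hn ha hconn s _
  have h1 : ∀ i, lo ≤ x s i := fun i => ciInf_le (Set.finite_range _).bddBelow i
  have h2 : ∀ i, x s i ≤ hi := fun i => le_ciSup (Set.finite_range (x s)).bddAbove i
  have hD : diam n x s = hi - lo := rfl
  have hD0 : 0 ≤ hi - lo := by
    have := (h1 ⟨0, by omega⟩).trans (h2 ⟨0, by omega⟩); linarith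
  rw [hD]
  set D := hi - lo with hDdef
  have hxlo := hx.affine 1 (-lo)
  have hxhi := hx.affine (-1) hi
  have hK0 : 0 < K := by linarith
  have hlo_t : ∀ i, lo ≤ x t i := traj_ge hn ha hx hK hcb hs hst h1
  have hhi_t : ∀ i, x t i ≤ hi := fun i => by
    have := traj_ge hn ha hxhi hK hcb hs hst (c := 0) (fun i => by have := h2 i; linarith) i
    linarith
  -- `2 (16 K)^m ≤ (8 K n²)^m`, since `8 n² ≥ 32` and `m ≥ 1`
  have hconst : D / (8 * K * (n:ℝ) ^ 2) ^ (n / 2) ≤ D / 2 / (16 * K) ^ (n / 2) := by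
    rw [div_div]
    refine div_le_div_of_nonneg_left hD0 (by positivity) ?_
    have hn2 : (4:ℝ) ≤ (n:ℝ) ^ 2 := by
      have : (2:ℝ) ≤ n := by exact_mod_cast hn
      nlinarith
    calc 2 * (16 * K) ^ (n / 2) ≤ 2 ^ (n / 2) * (16 * K) ^ (n / 2) := by
          refine mul_le_mul_of_nonneg_right ?_ (by positivity)
          exact le_self_pow₀ (by norm_num) (by omega)
      _ = (2 * (16 * K)) ^ (n / 2) := (mul_pow _ _ _).symm
      _ ≤ (8 * K * (n:ℝ) ^ 2) ^ (n / 2) := by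
          refine pow_le_pow_left₀ (by positivity) ?_ _
          nlinarith
  rw [sub_mul, one_mul, one_div, inv_mul_eq_div]
  -- every agent is at distance at least `D / 2` from one end, so half of them is from the same end
  have hcover : n ≤ #{i | D / 2 ≤ 1 * x s i + -lo} + #{i | D / 2 ≤ -1 * x s i + hi} := by
    calc n = #(Finset.univ : Finset (Fin n)) := by simp
      _ ≤ #((Finset.univ.filter fun i => D / 2 ≤ 1 * x s i + -lo) ∪
            (Finset.univ.filter fun i => D / 2 ≤ -1 * x s i + hi)) := by
          refine Finset.card_le_card fun i _ => ?_
          simp only [Finset.mem_union, Finset.mem_filter, Finset.mem_univ, true_and]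
          by_contra! hcon
          linarith [hcon.1, hcon.2]
      _ ≤ _ := Finset.card_union_le _ _
  rcases le_or_gt n (n / 2 + #{i | D / 2 ≤ 1 * x s i + -lo}) with hc | hc
  · have h3 := epoch hn ha hxlo hK hcb hconn hs (fun i => by have := h1 i; linarith)
      (show 0 ≤ D / 2 by positivity) hc
    have h4 := diam_le hn x t (lo := lo + D / 2 / (16 * K) ^ (n / 2)) (hi := hi)
      (fun i => by have := h3 i; rw [← ht] at this; linarith) hhi_t
    linarith
  · have h3 := epoch hn ha hxhi hK hcb hconn hs (fun i => by have := h2 i; linarith)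
      (show 0 ≤ D / 2 by positivity) (by omega)
    have h4 := diam_le hn x t (lo := lo) (hi := hi - D / 2 / (16 * K) ^ (n / 2))
      hlo_t (fun i => by have := h3 i; rw [← ht] at this; linarith)
    linarith

/-- under persistent connectivity and cut-balance with constant K,
Δ_N(t) ≤ (1 − 1/(8Kn²)^{⌊n/2⌋})^{P(t)} Δ_N(0), where P(t) = p for t ∈ [t_p, t_{p+1}). -/
theorem stmt7 (n : ℕ) (hn : 2 ≤ n) (a : Fin n → Fin n → ℝ → ℝ) (ha : IsWeight n a)
    (x : ℝ → Fin n → ℝ) (hx : IsTrajectory n a x)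
    (hconn : PersistentConn n a)
    (K : ℝ) (hK : 1 ≤ K)
    (hcb : ∀ S : Finset (Fin n), S.Nonempty → S ≠ Finset.univ → ∀ t : ℝ, 0 ≤ t →
        K⁻¹ * (∑ i ∈ S, ∑ j ∈ Sᶜ, a j i t) ≤ ∑ i ∈ S, ∑ j ∈ Sᶜ, a i j t ∧
        ∑ i ∈ S, ∑ j ∈ Sᶜ, a i j t ≤ K * (∑ i ∈ S, ∑ j ∈ Sᶜ, a j i t))
    (P : ℝ → ℕ)
    (hP : ∀ t : ℝ, 0 ≤ t → tpSeq n a (P t) ≤ t ∧ t < tpSeq n a (P t + 1)) :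
    ∀ t : ℝ, 0 ≤ t →
      diam n x t ≤ (1 - 1 / (8 * K * (n:ℝ)^2) ^ (n/2)) ^ (P t) * diam n x 0 := by
  intro t ht
  have hcb' : CutBalanced n a K := hcb
  have hseq : ∀ p, 0 ≤ tpSeq n a p ∧
      diam n x (tpSeq n a p) ≤ (1 - 1 / (8 * K * (n:ℝ)^2) ^ (n/2)) ^ p * diam n x 0 := by
    intro p
    induction p with
    | zero => simp [tpSeq]
    | succ p ih =>
      have e : tpSeq n a (p + 1) = (nextTime n a)^[n / 2] (tpSeq n a p) := by
        simp only [tpSeq]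
        rw [Function.iterate_succ_apply']
      rw [e]
      refine ⟨ih.1.trans (iterate_ge hn ha hconn _ _), ?_⟩
      refine (diam_contract hn ha hx hK hcb' hconn ih.1).trans ?_
      rw [pow_succ' _ p, mul_assoc (1 - 1 / (8 * K * (n:ℝ)^2) ^ (n/2))]
      refine mul_le_mul_of_nonneg_left ih.2 ?_
      have hn1 : (1:ℝ) ≤ (n:ℝ) ^ 2 := by
        have : (2:ℝ) ≤ n := by exact_mod_cast hn
        nlinarith
      have h1 : (1:ℝ) ≤ (8 * K * (n:ℝ)^2) ^ (n/2) := one_le_pow₀ (by nlinarith)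
      have := (div_le_one (by positivity)).2 h1
      linarith
  exact (diam_mono hn ha hx hK hcb' (hseq _).1 (hP t ht).1).trans (hseq _).2
end

section
/- The order-preserving trajectory y satisfies, for all t ≥ 0 and all i ∈ N, the integral equation y_i(t) = y_i(0) + ∫_0^t Σ_{j∈N} b_{ij}(s)(y_j(s) − y_i(s)) ds, where b_{ij}(s) = a_{σ_s(i)σ_s(j)}(s). -/
/-!
The `i`-th order statistic `y_i` of finitely many functions moves no faster than the sum of their
displacements (`abs_orderStat_sub_le`, a pigeonhole argument), so `y_i` inherits absolute
continuity from the agents `x_k`, and it is the integral of its a.e. derivative. By Lebesgue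
differentiation each `x_k` has derivative `f_k(s) = ∑ j, a_{kj}(s) (x_j(s) - x_k(s))` for a.e. `s`.

Two functions which are both differentiable have equal derivatives at almost every point where they
coincide, because the coincidence points with distinct derivatives are isolated in the coincidence
set, hence countably many (`ae_hasDerivAt_eq_of_eq`). Applied to `y_i` and each of the finitely many
`x_k`, this gives `y_i'(s) = f_{σ_s(i)}(s)` for a.e. `s`. Re-indexing the sum over `j` by `σ_s` turns
this derivative into the claimed integrand.
-/

open MeasureTheory Filter Finset
open scoped ENNReal

/-- At a point of coincidence with distinct derivatives the two functions differ on a punctured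
neighbourhood, so such points are isolated in the coincidence set and form a countable set. -/
lemma ae_hasDerivAt_eq_of_eq (f g : ℝ → ℝ) :
    ∀ᵐ s : ℝ, f s = g s → ∀ f' g' : ℝ, HasDerivAt f f' s → HasDerivAt g g' s → f' = g' := by
  have hc := countable_setOfPred_isolated_right_within (s := {s : ℝ | f s = g s})
  filter_upwards [hc.ae_notMem volume] with s hs hfg f' g' hf hg
  by_contra hne
  apply hs
  refine ⟨hfg, ?_⟩
  have h := (hf.sub hg).eventually_ne (c := 0) (sub_ne_zero.2 hne)
  rw [← Filter.empty_mem_iff_bot]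
  rw [eventually_nhdsWithin_iff] at h
  rw [mem_nhdsWithin_iff_eventually]
  filter_upwards [h] with z hz hz'
  exact absurd (sub_eq_zero.2 hz'.1) (hz (ne_of_gt hz'.2))

/-- Among the `n - i` top positions for the ordering `τ` and the `i + 1` bottom positions for the
ordering `ρ` some agent occurs twice. -/
lemma exists_common_agent {n : ℕ} (τ ρ : Equiv.Perm (Fin n)) (i : Fin n) :
    ∃ p q : Fin n, i ≤ p ∧ q ≤ i ∧ τ p = ρ q := by
  by_contra! h
  have hd : Disjoint ((Finset.Ici i).map τ.toEmbedding) ((Finset.Iic i).map ρ.toEmbedding) := by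
    rw [Finset.disjoint_left]
    intro k hk hk'
    simp only [Finset.mem_map, Finset.mem_Ici, Finset.mem_Iic, Equiv.coe_toEmbedding] at hk hk'
    obtain ⟨p, hp, rfl⟩ := hk
    obtain ⟨q, hq, hpq⟩ := hk'
    exact h p q hp hq hpq.symm
  have h1 := Finset.card_le_univ
    (((Finset.Ici i).map τ.toEmbedding) ∪ ((Finset.Iic i).map ρ.toEmbedding))
  rw [Finset.card_union_of_disjoint hd] at h1
  simp only [Finset.card_map, Fin.card_Ici, Fin.card_Iic, Fintype.card_fin] at h1
  have := i.2
  omega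

lemma IsSortingPerm.monotone {n : ℕ} {x : ℝ → Fin n → ℝ} {σ : ℝ → Equiv.Perm (Fin n)}
    (hσ : IsSortingPerm n x σ) (t : ℝ) : Monotone fun i => x t (σ t i) := by
  intro i j hij
  rcases hij.eq_or_lt with rfl | h
  · exact le_rfl
  · rcases hσ t i j h with h | h
    · exact h.le
    · exact h.1.le

lemma orderStat_sub_le {n : ℕ} {x : ℝ → Fin n → ℝ} {σ : ℝ → Equiv.Perm (Fin n)}
    (hσ : IsSortingPerm n x σ) (i : Fin n) (s t : ℝ) :
    x t (σ t i) - x s (σ s i) ≤ ∑ k, |x t k - x s k| := by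
  obtain ⟨p, q, hp, hq, hpq⟩ := exists_common_agent (σ t) (σ s) i
  have h1 : x t (σ t i) ≤ x t (σ t p) := hσ.monotone t hp
  have h2 : x s (σ s q) ≤ x s (σ s i) := hσ.monotone s hq
  have h3 := Finset.single_le_sum (f := fun k => |x t k - x s k|)
    (fun k _ => abs_nonneg _) (Finset.mem_univ (σ t p))
  have h4 := le_abs_self (x t (σ t p) - x s (σ t p))
  rw [← hpq] at h2
  linarith

lemma abs_orderStat_sub_le {n : ℕ} {x : ℝ → Fin n → ℝ} {σ : ℝ → Equiv.Perm (Fin n)}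
    (hσ : IsSortingPerm n x σ) (i : Fin n) (s t : ℝ) :
    |x t (σ t i) - x s (σ s i)| ≤ ∑ k, |x t k - x s k| := by
  rw [abs_le]
  have h1 := orderStat_sub_le hσ i s t
  have h2 := orderStat_sub_le hσ i t s
  simp_rw [abs_sub_comm (x s _) (x t _)] at h2
  constructor <;> linarith

lemma absolutelyContinuousOnInterval_orderStat {n : ℕ} {x : ℝ → Fin n → ℝ}
    {σ : ℝ → Equiv.Perm (Fin n)} (hσ : IsSortingPerm n x σ) {b c : ℝ}
    (hx : ∀ k, AbsolutelyContinuousOnInterval (fun t => x t k) b c) (i : Fin n) :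
    AbsolutelyContinuousOnInterval (fun t => x t (σ t i)) b c := by
  have h := tendsto_finsetSum (Finset.univ : Finset (Fin n)) fun k _ => hx k
  simp only [Finset.sum_const_zero] at h
  refine squeeze_zero (fun E => Finset.sum_nonneg fun _ _ => dist_nonneg) (fun E => ?_) h
  rw [Finset.sum_comm]
  refine Finset.sum_le_sum fun m _ => ?_
  simpa only [Real.dist_eq] using abs_orderStat_sub_le hσ i (E.2 m).2 (E.2 m).1

/-- A trajectory solves the differential equation almost everywhere. -/
lemma IsTrajectory.ae_hasDerivAt {n : ℕ} {a : Fin n → Fin n → ℝ → ℝ} {x : ℝ → Fin n → ℝ}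
    (hx : IsTrajectory n a x) {T : ℝ} (hT : 0 ≤ T) (k : Fin n) :
    ∀ᵐ s : ℝ, s ∈ Set.Ioo 0 T →
      HasDerivAt (fun t => x t k) (∑ j, a k j s * (x s j - x s k)) s := by
  filter_upwards [(hx.2 k T hT).1.ae_hasDerivAt_integral] with s hs hsT
  have h := hs (by rw [Set.uIcc_of_le hT]; exact Set.Ioo_subset_Icc_self hsT) 0
    Set.left_mem_uIcc
  refine (h.const_add (x 0 k)).congr_of_eventuallyEq ?_
  filter_upwards [Ioi_mem_nhds hsT.1] with u hu
  exact (hx.2 k u (le_of_lt hu)).2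

lemma IsTrajectory.absolutelyContinuousOnInterval {n : ℕ} {a : Fin n → Fin n → ℝ → ℝ}
    {x : ℝ → Fin n → ℝ} (hx : IsTrajectory n a x) {T : ℝ} (hT : 0 ≤ T) (k : Fin n) :
    AbsolutelyContinuousOnInterval (fun t => x t k) 0 T := by
  have h := (hx.2 k T hT).1.absolutelyContinuousOnInterval_intervalIntegral
    (Set.left_mem_uIcc (a := (0 : ℝ)) (b := T))
  rw [absolutelyContinuousOnInterval_iff] at h ⊢
  intro ε hε
  obtain ⟨δ, hδ, H⟩ := h ε hε
  refine ⟨δ, hδ, fun E hE hlen => ?_⟩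
  convert H E hE hlen using 2 with m hm
  have hmem := hE.1 m hm
  rw [Set.uIcc_of_le hT] at hmem
  rw [(hx.2 k _ hmem.1.1).2, (hx.2 k _ hmem.2.1).2, dist_add_left]

/-- the order-preserving trajectory satisfies the integral equation with
the reordered weights b_{ij}(s) = a_{σ_s(i) σ_s(j)}(s). -/
theorem stmt9 (n : ℕ) (hn : 1 ≤ n) (a : Fin n → Fin n → ℝ → ℝ) (ha : IsWeight n a)
    (x : ℝ → Fin n → ℝ) (hx : IsTrajectory n a x)
    (σ : ℝ → Equiv.Perm (Fin n)) (hσ : IsSortingPerm n x σ) :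
    ∀ t : ℝ, 0 ≤ t → ∀ i : Fin n,
      x t (σ t i) = x 0 (σ 0 i) +
        ∫ s in (0:ℝ)..t, ∑ j : Fin n,
          a (σ s i) (σ s j) s * (x s (σ s j) - x s (σ s i)) := by
  intro t ht i
  have hy := absolutelyContinuousOnInterval_orderStat hσ
    (hx.absolutelyContinuousOnInterval ht) i
  have hFTC := hy.integral_deriv_eq_sub
  have hae : ∀ᵐ s : ℝ, s ∈ Set.uIoc 0 t → deriv (fun u => x u (σ u i)) s =
      ∑ j : Fin n, a (σ s i) (σ s j) s * (x s (σ s j) - x s (σ s i)) := by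
    have h1 := ae_all_iff.2 (hx.ae_hasDerivAt ht)
    have h2 := ae_all_iff.2 fun k => ae_hasDerivAt_eq_of_eq (fun u => x u (σ u i)) (fun u => x u k)
    filter_upwards [h1, h2, hy.ae_differentiableAt, Measure.ae_ne volume t] with s h1 h2 h3 hst hs
    rw [Set.uIoc_of_le ht] at hs
    have hd := h3 (by rw [Set.uIcc_of_le ht]; exact Set.Ioc_subset_Icc_self hs)
    rw [h2 (σ s i) rfl _ _ hd.hasDerivAt (h1 (σ s i) ⟨hs.1, lt_of_le_of_ne hs.2 hst⟩)]
    exact (Equiv.sum_comp (σ s) fun j => a (σ s i) j s * (x s j - x s (σ s i))).symm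
  rw [← intervalIntegral.integral_congr_ae hae, hFTC]
  ring
end

section
/- Let 0 ≤ t < t′ and suppose there exist l ∈ {1,…,n−1} and real numbers c < C such that for all s ∈ [t,t′], y_l(s) ≤ c and C ≤ y_{l+1}(s). Then for all s ∈ [t,t′], the image sets σ_s({1,…,l}) and σ_s({l+1,…,n}) remain constant (equal to σ_t({1,…,l}) and σ_t({l+1,…,n}) respectively). -/
/-!
Along each trajectory coordinate `k`, the value `x s k` never lies in the open gap `(c, C)` for
`s ∈ [t, t']`: the position of `k` in the sorted order is either below `l`, forcing `x s k ≤ c`, or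
at least `l`, forcing `C ≤ x s k`. Since `s ↦ x s k` is continuous, the intermediate value theorem
prevents it from crossing the gap, so `k` stays on the side where it is at time `t`. The sets
`σ_s({1,…,l})` and `σ_s({l+1,…,n})` are exactly the sets of agents on the two sides.
-/

open MeasureTheory Filter Finset
open scoped ENNReal

theorem IsSortingPerm.apply_le {n : ℕ} {x : ℝ → Fin n → ℝ} {σ : ℝ → Equiv.Perm (Fin n)}
    (hσ : IsSortingPerm n x σ) (s : ℝ) {i j : Fin n} (hij : i ≤ j) :
    x s (σ s i) ≤ x s (σ s j) := by
  rcases hij.eq_or_lt with rfl | h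
  · exact le_rfl
  · rcases hσ s i j h with h | h
    exacts [h.le, h.1.le]

/-- A continuous function on an interval that avoids the gap `(c, C)` stays on one side of it. -/
theorem le_of_avoids_gap {f : ℝ → ℝ} {u v c C : ℝ} (hcC : c < C)
    (hf : ContinuousOn f (Set.Icc u v)) (hgap : ∀ s ∈ Set.Icc u v, f s ≤ c ∨ C ≤ f s)
    {s r : ℝ} (hs : s ∈ Set.Icc u v) (hr : r ∈ Set.Icc u v) (h : f s ≤ c) : f r ≤ c := by
  by_contra hrc
  have hrC : C ≤ f r := (hgap r hr).resolve_left hrc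
  obtain ⟨w, hw, hfw⟩ := isPreconnected_Icc.intermediate_value hs hr hf
    (show (c + C) / 2 ∈ Set.Icc (f s) (f r) from ⟨by linarith, by linarith⟩)
  rcases hgap w hw with h | h <;> linarith

/-- if on [t,t'] the l-th sorted position stays ≤ c and the (l+1)-th stays
≥ C with c < C, then the index sets σ_s({1,…,l}) and σ_s({l+1,…,n}) remain constant. -/
theorem stmt11 (n : ℕ) (hn : 2 ≤ n) (a : Fin n → Fin n → ℝ → ℝ) (ha : IsWeight n a)
    (x : ℝ → Fin n → ℝ) (hx : IsTrajectory n a x)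
    (σ : ℝ → Equiv.Perm (Fin n)) (hσ : IsSortingPerm n x σ)
    (t t' : ℝ) (ht : 0 ≤ t) (htt' : t < t')
    (l : ℕ) (hl : 1 ≤ l) (hln : l < n)
    (c C : ℝ) (hcC : c < C)
    (hbound : ∀ s ∈ Set.Icc t t',
      x s (σ s ⟨l-1, by omega⟩) ≤ c ∧ C ≤ x s (σ s ⟨l, hln⟩)) :
    ∀ s ∈ Set.Icc t t',
      (fun i => σ s i) '' {i : Fin n | (i:ℕ) < l} =
        (fun i => σ t i) '' {i : Fin n | (i:ℕ) < l} ∧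
      (fun i => σ s i) '' {i : Fin n | l ≤ (i:ℕ)} =
        (fun i => σ t i) '' {i : Fin n | l ≤ (i:ℕ)} := by
  have low : ∀ s ∈ Set.Icc t t', ∀ i : Fin n, (i : ℕ) < l → x s (σ s i) ≤ c := fun s hs i hi =>
    (hσ.apply_le s (Fin.mk_le_mk.2 (by omega : (i : ℕ) ≤ l - 1))).trans (hbound s hs).1
  have high : ∀ s ∈ Set.Icc t t', ∀ i : Fin n, l ≤ (i : ℕ) → C ≤ x s (σ s i) := fun s hs i hi =>
    (hbound s hs).2.trans (hσ.apply_le s (Fin.mk_le_mk.2 hi))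
  have pos : ∀ s ∈ Set.Icc t t', ∀ k, ((σ s).symm k : ℕ) < l ↔ x s k ≤ c := by
    intro s hs k
    refine ⟨fun h => by simpa using low s hs _ h, fun h => ?_⟩
    by_contra hk
    have := high s hs _ (not_lt.1 hk)
    rw [Equiv.apply_symm_apply] at this
    linarith
  have gap : ∀ k, ∀ s ∈ Set.Icc t t', x s k ≤ c ∨ C ≤ x s k := by
    intro k s hs
    rcases lt_or_ge ((σ s).symm k : ℕ) l with h | h
    · exact Or.inl (by simpa using low s hs _ h)
    · exact Or.inr (by simpa using high s hs _ h)
  have cont : ∀ k, ContinuousOn (fun s => x s k) (Set.Icc t t') := fun k =>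
    (hx.1 k).mono fun s hs => ht.trans hs.1
  intro s hs
  have ht0 : t ∈ Set.Icc t t' := ⟨le_rfl, htt'.le⟩
  have key : ∀ k, ((σ s).symm k : ℕ) < l ↔ ((σ t).symm k : ℕ) < l := by
    intro k
    rw [pos s hs, pos t ht0]
    exact ⟨le_of_avoids_gap hcC (cont k) (gap k) hs ht0,
      le_of_avoids_gap hcC (cont k) (gap k) ht0 hs⟩
  have img : ∀ (τ : Equiv.Perm (Fin n)) (A : Set (Fin n)),
      (fun i => τ i) '' A = {k | τ.symm k ∈ A} := fun τ A => τ.image_eq_preimage_symm A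
  constructor
  · rw [img, img]
    ext k
    exact key k
  · rw [img, img]
    ext k
    simpa only [Set.mem_ofPred_eq, not_lt] using not_congr (key k)
end

section
/- Let b_{ij} ≥ 0 (i,j ∈ {1,…,n}) and R ≥ 1 satisfy, for every nonempty proper subset S ⊊ {1,…,n}: (1/R) Σ_{i∈S,j∉S} b_{ij} ≤ Σ_{i∈S,j∉S} b_{ji} ≤ R Σ_{i∈S,j∉S} b_{ij}. Then for every vector y ∈ ℝ^n with y_1 ≤ y_2 ≤ … ≤ y_n and every l ∈ {1,…,n}: Σ_{i=1}^l R^{−i} (Σ_{j=1}^n b_{ij}(y_j − y_i)) ≥ 0. -/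
/-!
Write `d k = y (k+1) - y k ≥ 0`. Then `y j - y i = ∑ₖ d k * ([k < j] - [k < i])`, so the sum in
question is a combination of the `d k`, and it suffices that each coefficient is non-negative.
Put `wᵢ = R⁻ⁱ` for `i ≤ l` and `wᵢ = 0` otherwise. The coefficient of `d k` is the flow out of
`S = {1,…,k}` weighted by `wᵢ` minus the flow into `S` weighted by `wᵢ`. For `k ≥ l` the second part
vanishes. For `k < l` the first part is at least `R⁻ᵏ` times the outgoing flow and the second at
most `R⁻⁽ᵏ⁺¹⁾` times the incoming flow, so cut-balance of `S` gives the claim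
(`cut_coeff_nonneg`).
-/

open Finset

/-- Telescoping of a sequence into its increments, with the summation range independent of `j`. -/
lemma eq_add_sum_increments (y : ℕ → ℝ) (n j : ℕ) (h1 : 1 ≤ j) (hj : j ≤ n) :
    y j = y 1 + ∑ k ∈ Ico 1 n, (y (k + 1) - y k) * (if k < j then 1 else 0) := by
  have h : ∑ k ∈ Ico 1 n, (y (k + 1) - y k) * (if k < j then 1 else 0)
      = ∑ k ∈ Ico 1 j, (y (k + 1) - y k) := by
    simp only [mul_ite, mul_one, mul_zero]
    rw [← sum_filter]
    congr 1
    ext k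
    simp only [mem_filter, mem_Ico]
    omega
  rw [h, sum_Ico_sub y h1]
  ring

/-- The coefficient of the increment `y (k+1) - y k` is non-negative, given cut-balance of
`{1,…,k}`. -/
lemma cut_coeff_nonneg (n : ℕ) (b : ℕ → ℕ → ℝ) (hb : ∀ i j, 0 ≤ b i j)
    (R : ℝ) (hR : 1 ≤ R) (k l : ℕ) (hkn : k < n) (hln : l ≤ n)
    (hcut : ∑ i ∈ Icc 1 k, ∑ j ∈ Icc 1 n \ Icc 1 k, b j i ≤
        R * (∑ i ∈ Icc 1 k, ∑ j ∈ Icc 1 n \ Icc 1 k, b i j)) :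
    0 ≤ ∑ i ∈ Icc 1 l, (R ^ i)⁻¹ * ∑ j ∈ Icc 1 n,
      b i j * ((if k < j then 1 else 0) - (if k < i then 1 else 0)) := by
  have hR0 : 0 < R := by linarith
  rcases le_or_gt l k with hlk | hkl
  · refine sum_nonneg fun i hi => mul_nonneg (by positivity) (sum_nonneg fun j _ => ?_)
    have hi' : ¬ k < i := by have := (mem_Icc.mp hi).2; omega
    rw [if_neg hi']
    refine mul_nonneg (hb i j) ?_
    split_ifs <;> norm_num
  · have hdiff : Icc 1 n \ Icc 1 k = Ioc k n := by
      ext j; simp only [mem_sdiff, mem_Icc, mem_Ioc]; omega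
    rw [hdiff] at hcut
    have hsplit : ∀ (m : ℕ), k ≤ m → ∀ f : ℕ → ℝ,
        ∑ i ∈ Icc 1 m, f i = ∑ i ∈ Icc 1 k, f i + ∑ i ∈ Ioc k m, f i := by
      intro m hm f
      rw [← sum_union]
      · congr 1; ext i; simp only [mem_union, mem_Icc, mem_Ioc]; omega
      · rw [disjoint_left]; intro i; simp only [mem_Icc, mem_Ioc]; omega
    have hout : (R ^ k)⁻¹ * ∑ i ∈ Icc 1 k, ∑ j ∈ Ioc k n, b i j ≤
        ∑ i ∈ Icc 1 k, (R ^ i)⁻¹ * ∑ j ∈ Icc 1 n,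
          b i j * ((if k < j then 1 else 0) - (if k < i then 1 else 0)) := by
      rw [mul_sum]
      refine sum_le_sum fun i hi => ?_
      have hik := (mem_Icc.mp hi).2
      have e : ∑ j ∈ Icc 1 n, b i j * ((if k < j then 1 else 0) - (if k < i then (1:ℝ) else 0))
          = ∑ j ∈ Ioc k n, b i j := by
        rw [hsplit n hkn.le, if_neg (by omega : ¬ k < i)]
        rw [sum_eq_zero, zero_add]
        · refine sum_congr rfl fun j hj => ?_
          rw [if_pos (mem_Ioc.mp hj).1]; ring
        · intro j hj
          rw [if_neg (by have := (mem_Icc.mp hj).2; omega)]; ring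
      rw [e]
      refine mul_le_mul_of_nonneg_right ?_ (sum_nonneg fun j _ => hb i j)
      exact inv_anti₀ (by positivity) (pow_le_pow_right₀ hR hik)
    have hin : -((R ^ (k + 1))⁻¹ * ∑ i ∈ Icc 1 k, ∑ j ∈ Ioc k n, b j i) ≤
        ∑ i ∈ Ioc k l, (R ^ i)⁻¹ * ∑ j ∈ Icc 1 n,
          b i j * ((if k < j then 1 else 0) - (if k < i then 1 else 0)) := by
      have e : ∀ i ∈ Ioc k l, -((R ^ (k + 1))⁻¹ * ∑ j ∈ Icc 1 k, b i j) ≤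
          (R ^ i)⁻¹ * ∑ j ∈ Icc 1 n,
          b i j * ((if k < j then 1 else 0) - (if k < i then (1:ℝ) else 0)) := by
        intro i hi
        have hki := (mem_Ioc.mp hi).1
        have e : ∑ j ∈ Icc 1 n, b i j * ((if k < j then 1 else 0) - (if k < i then (1:ℝ) else 0))
            = - ∑ j ∈ Icc 1 k, b i j := by
          rw [hsplit n hkn.le, if_pos hki, add_comm, sum_eq_zero, zero_add, ← sum_neg_distrib]
          · refine sum_congr rfl fun j hj => ?_
            rw [if_neg (by have := (mem_Icc.mp hj).2; omega)]; ring
          · intro j hj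
            rw [if_pos (mem_Ioc.mp hj).1]; ring
        rw [e, mul_neg, neg_le_neg_iff]
        refine mul_le_mul_of_nonneg_right ?_ (sum_nonneg fun j _ => hb i j)
        exact inv_anti₀ (by positivity) (pow_le_pow_right₀ hR hki)
      refine le_trans ?_ (sum_le_sum e)
      rw [sum_neg_distrib, neg_le_neg_iff, ← mul_sum, sum_comm (s := Icc 1 k)]
      refine mul_le_mul_of_nonneg_left ?_ (by positivity)
      exact sum_le_sum_of_subset_of_nonneg (Ioc_subset_Ioc_right hln)
        fun i _ _ => sum_nonneg fun j _ => hb i j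
    have hbal := mul_le_mul_of_nonneg_left hcut (by positivity : 0 ≤ (R ^ (k + 1))⁻¹)
    have hpow : (R ^ (k + 1))⁻¹ * R = (R ^ k)⁻¹ := by
      rw [pow_succ]; field_simp
    rw [← mul_assoc, hpow] at hbal
    rw [hsplit l hkl.le]
    linarith

/-- Lemma on cut-balanced matrices, first inequality:
with agents indexed by {1,…,n}, non-negative weights b satisfying the cut-balance bounds
with constant R ≥ 1, and a sorted vector y, one has
Σ_{i=1}^l R^{−i} Σ_{j=1}^n b_{ij}(y_j − y_i) ≥ 0 for every l ∈ {1,…,n}. -/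
theorem stmt12 (n : ℕ) (hn : 2 ≤ n) (b : ℕ → ℕ → ℝ) (hb : ∀ i j, 0 ≤ b i j)
    (R : ℝ) (hR : 1 ≤ R)
    (hcb : ∀ S : Finset ℕ, S ⊆ Finset.Icc 1 n → S.Nonempty → S ≠ Finset.Icc 1 n →
      R⁻¹ * (∑ i ∈ S, ∑ j ∈ Finset.Icc 1 n \ S, b i j) ≤
        ∑ i ∈ S, ∑ j ∈ Finset.Icc 1 n \ S, b j i ∧
      ∑ i ∈ S, ∑ j ∈ Finset.Icc 1 n \ S, b j i ≤
        R * (∑ i ∈ S, ∑ j ∈ Finset.Icc 1 n \ S, b i j))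
    (y : ℕ → ℝ) (hy : ∀ i j, 1 ≤ i → i ≤ j → j ≤ n → y i ≤ y j)
    (l : ℕ) (hl : 1 ≤ l) (hln : l ≤ n) :
    0 ≤ ∑ i ∈ Finset.Icc 1 l, (R ^ i)⁻¹ * (∑ j ∈ Finset.Icc 1 n, b i j * (y j - y i)) := by
  have key : ∑ i ∈ Icc 1 l, (R ^ i)⁻¹ * (∑ j ∈ Icc 1 n, b i j * (y j - y i)) =
      ∑ k ∈ Ico 1 n, (y (k + 1) - y k) * ∑ i ∈ Icc 1 l, (R ^ i)⁻¹ * ∑ j ∈ Icc 1 n,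
        b i j * ((if k < j then 1 else 0) - (if k < i then 1 else 0)) := by
    simp only [mul_sum]
    conv_rhs => rw [sum_comm]
    refine sum_congr rfl fun i hi => ?_
    conv_rhs => rw [sum_comm]
    refine sum_congr rfl fun j hj => ?_
    rw [mem_Icc] at hi hj
    rw [eq_add_sum_increments y n j hj.1 hj.2, eq_add_sum_increments y n i hi.1 (hi.2.trans hln),
      add_sub_add_left_eq_sub, ← sum_sub_distrib, mul_sum, mul_sum]
    refine sum_congr rfl fun k _ => ?_
    ring
  rw [key]
  refine sum_nonneg fun k hk => ?_
  rw [mem_Ico] at hk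
  refine mul_nonneg (sub_nonneg.mpr (hy k (k + 1) hk.1 (by omega) (by omega))) ?_
  refine cut_coeff_nonneg n b hb R hR k l hk.2 hln (hcb (Icc 1 k) ?_ ?_ ?_).2
  · exact Icc_subset_Icc_right hk.2.le
  · exact ⟨1, mem_Icc.mpr ⟨le_rfl, hk.1⟩⟩
  · intro h
    have hmem : n ∈ Icc 1 k := h ▸ mem_Icc.mpr ⟨by omega, le_rfl⟩
    have := (mem_Icc.mp hmem).2
    omega
end

section
/- Let b_{ij} ≥ 0 (i,j ∈ {1,…,n}) and R ≥ 1 satisfy, for every nonempty proper subset S ⊊ {1,…,n}: (1/R) Σ_{i∈S,j∉S} b_{ij} ≤ Σ_{i∈S,j∉S} b_{ji} ≤ R Σ_{i∈S,j∉S} b_{ij}. Then for every vector y ∈ ℝ^n with y_1 ≤ y_2 ≤ … ≤ y_n and every l ∈ {1,…,n−1}: Σ_{i=1}^l R^{−i} (Σ_{j=1}^n b_{ij}(y_j − y_i)) ≥ (y_{l+1} − y_l) R^{−l} Σ_{i=l+1}^n Σ_{j=1}^l b_{ji}. -/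
open Finset

/-!
Write `d k = y (k+1) - y k ≥ 0`. Since `y j - y i = ∑ k, d k * ([k < j] - [k < i])`, the right-hand
side equals `∑ k, d k * gapCoeff n b R l k`, and it suffices to bound each coefficient separately.

* If `l ≤ k`, no index `i ≤ l` exceeds `k`, so every term of the coefficient is non-negative; for
  `k = l` the bound `R⁻ⁱ ≥ R⁻ˡ` yields the left-hand side (`le_gapCoeff_self`).
* If `k < l`, the positive part is at least `R⁻ᵏ ∑_{i ≤ k < j} b i j` and the negative part is at most
  `R⁻⁽ᵏ⁺¹⁾ ∑_{i ≤ k < j} b j i`; cut-balance for `S = {1, …, k}` says precisely that the former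
  dominates the latter (`gapCoeff_nonneg_of_lt`).
-/

/-- The indicator of `k < j`, as a real number. -/
def above (k j : ℕ) : ℝ := if k < j then 1 else 0

/-- The coefficient of the gap `y (k+1) - y k` in `∑_{i ≤ l} R⁻ⁱ ∑_j b i j * (y j - y i)`. -/
noncomputable def gapCoeff (n : ℕ) (b : ℕ → ℕ → ℝ) (R : ℝ) (l k : ℕ) : ℝ :=
  ∑ i ∈ Icc 1 l, (R ^ i)⁻¹ * ∑ j ∈ Icc 1 n, b i j * (above k j - above k i)

lemma eq_add_sum_gaps (n : ℕ) (y : ℕ → ℝ) (j : ℕ) (hj : 1 ≤ j) (hjn : j ≤ n) :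
    y j = y 1 + ∑ k ∈ Ico 1 n, (y (k + 1) - y k) * above k j := by
  have h1 : ∑ k ∈ Ico 1 n, (y (k + 1) - y k) * above k j
      = ∑ k ∈ Ico 1 j, (y (k + 1) - y k) := by
    simp only [above, mul_ite, mul_one, mul_zero]
    rw [← sum_filter]
    congr 1
    ext k
    simp only [mem_filter, mem_Ico]
    omega
  rw [h1, sum_Ico_sub y hj]
  ring

lemma sum_eq_sum_gapCoeff (n : ℕ) (b : ℕ → ℕ → ℝ) (R : ℝ) (y : ℕ → ℝ) (l : ℕ) (hln : l ≤ n) :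
    ∑ i ∈ Icc 1 l, (R ^ i)⁻¹ * (∑ j ∈ Icc 1 n, b i j * (y j - y i))
      = ∑ k ∈ Ico 1 n, (y (k + 1) - y k) * gapCoeff n b R l k := by
  simp only [gapCoeff, mul_sum]
  rw [sum_comm (s := Ico 1 n)]
  refine sum_congr rfl fun i hi => ?_
  rw [sum_comm (s := Ico 1 n)]
  refine sum_congr rfl fun j hj => ?_
  rw [mem_Icc] at hi hj
  rw [eq_add_sum_gaps n y j hj.1 hj.2, eq_add_sum_gaps n y i hi.1 (hi.2.trans hln),
    add_sub_add_left_eq_sub, ← sum_sub_distrib, mul_sum, mul_sum]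
  refine sum_congr rfl fun k _ => ?_
  ring

lemma gapCoeff_nonneg_of_le (n : ℕ) (b : ℕ → ℕ → ℝ) (hb : ∀ i j, 0 ≤ b i j) (R : ℝ) (hR : 1 ≤ R)
    (l k : ℕ) (hk : l ≤ k) : 0 ≤ gapCoeff n b R l k := by
  refine sum_nonneg fun i hi => mul_nonneg (by positivity) (sum_nonneg fun j _ => ?_)
  rw [mem_Icc] at hi
  refine mul_nonneg (hb i j) ?_
  have : ¬ k < i := by omega
  simp only [above, this, if_false, sub_zero]
  split_ifs <;> norm_num

lemma le_gapCoeff_self (n : ℕ) (b : ℕ → ℕ → ℝ) (hb : ∀ i j, 0 ≤ b i j) (R : ℝ) (hR : 1 ≤ R)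
    (l : ℕ) :
    (R ^ l)⁻¹ * (∑ i ∈ Icc (l + 1) n, ∑ j ∈ Icc 1 l, b j i) ≤ gapCoeff n b R l l := by
  rw [sum_comm, mul_sum, gapCoeff]
  refine sum_le_sum fun i hi => ?_
  rw [mem_Icc] at hi
  have h : ∑ j ∈ Icc 1 n, b i j * (above l j - above l i) = ∑ j ∈ Icc (l + 1) n, b i j := by
    have : ¬ l < i := by omega
    simp only [above, this, if_false, sub_zero, mul_ite, mul_one, mul_zero]
    rw [← sum_filter]
    congr 1
    ext j
    simp only [mem_filter, mem_Icc]
    omega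
  rw [h]
  refine mul_le_mul_of_nonneg_right ?_ (sum_nonneg fun j _ => hb i j)
  exact inv_anti₀ (by positivity) (pow_le_pow_right₀ hR hi.2)

/-- The only place where cut-balance enters, through the cut `S = {1, …, k}`. -/
lemma gapCoeff_nonneg_of_lt (n : ℕ) (b : ℕ → ℕ → ℝ) (hb : ∀ i j, 0 ≤ b i j) (R : ℝ) (hR : 1 ≤ R)
    (l k : ℕ) (hkl : k < l) (hln : l ≤ n)
    (hcut : ∑ i ∈ Icc 1 k, ∑ j ∈ Icc (k + 1) n, b j i ≤
      R * ∑ i ∈ Icc 1 k, ∑ j ∈ Icc (k + 1) n, b i j) :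
    0 ≤ gapCoeff n b R l k := by
  -- Rows `i ≤ k` contribute only positive terms, rows `k < i ≤ l` only negative ones.
  have hsplit : gapCoeff n b R l k =
      ∑ i ∈ Icc 1 k, (R ^ i)⁻¹ * ∑ j ∈ Icc (k + 1) n, b i j
        - ∑ i ∈ Icc (k + 1) l, (R ^ i)⁻¹ * ∑ j ∈ Icc 1 k, b i j := by
    have hI : Icc 1 l = Icc 1 k ∪ Icc (k + 1) l := by
      ext i; simp only [mem_union, mem_Icc]; omega
    have hd : Disjoint (Icc 1 k) (Icc (k + 1) l) := by
      rw [disjoint_left]; intro i; simp only [mem_Icc]; omega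
    rw [gapCoeff, hI, sum_union hd, sub_eq_add_neg, ← sum_neg_distrib]
    congr 1
    · refine sum_congr rfl fun i hi => ?_
      rw [mem_Icc] at hi
      have : ¬ k < i := by omega
      simp only [above, this, if_false, sub_zero, mul_ite, mul_one, mul_zero]
      rw [← sum_filter]
      congr 2
      ext j
      simp only [mem_filter, mem_Icc]
      omega
    · refine sum_congr rfl fun i hi => ?_
      rw [mem_Icc] at hi
      have hki : k < i := by omega
      rw [← mul_neg, ← sum_neg_distrib]
      have hF : Icc 1 k = (Icc 1 n).filter (fun j => ¬ k < j) := by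
        ext j; simp only [mem_filter, mem_Icc]; omega
      rw [hF, sum_filter]
      congr 1
      refine sum_congr rfl fun j _ => ?_
      by_cases hkj : k < j <;> simp [above, hki, hkj]
  have hpos : (R ^ k)⁻¹ * ∑ i ∈ Icc 1 k, ∑ j ∈ Icc (k + 1) n, b i j ≤
      ∑ i ∈ Icc 1 k, (R ^ i)⁻¹ * ∑ j ∈ Icc (k + 1) n, b i j := by
    rw [mul_sum]
    refine sum_le_sum fun i hi => ?_
    rw [mem_Icc] at hi
    exact mul_le_mul_of_nonneg_right
      (inv_anti₀ (by positivity) (pow_le_pow_right₀ hR hi.2)) (sum_nonneg fun j _ => hb i j)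
  have hneg : ∑ i ∈ Icc (k + 1) l, (R ^ i)⁻¹ * ∑ j ∈ Icc 1 k, b i j ≤
      (R ^ (k + 1))⁻¹ * ∑ i ∈ Icc 1 k, ∑ j ∈ Icc (k + 1) n, b j i := by
    rw [sum_comm, mul_sum]
    calc ∑ i ∈ Icc (k + 1) l, (R ^ i)⁻¹ * ∑ j ∈ Icc 1 k, b i j
        ≤ ∑ i ∈ Icc (k + 1) l, (R ^ (k + 1))⁻¹ * ∑ j ∈ Icc 1 k, b i j := by
          refine sum_le_sum fun i hi => ?_
          rw [mem_Icc] at hi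
          exact mul_le_mul_of_nonneg_right
            (inv_anti₀ (by positivity) (pow_le_pow_right₀ hR hi.1)) (sum_nonneg fun j _ => hb i j)
      _ ≤ _ := by
          refine sum_le_sum_of_subset_of_nonneg (Icc_subset_Icc_right hln) fun i _ _ => ?_
          exact mul_nonneg (by positivity) (sum_nonneg fun j _ => hb i j)
  have hmid : (R ^ (k + 1))⁻¹ * ∑ i ∈ Icc 1 k, ∑ j ∈ Icc (k + 1) n, b j i ≤
      (R ^ k)⁻¹ * ∑ i ∈ Icc 1 k, ∑ j ∈ Icc (k + 1) n, b i j := by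
    refine (mul_le_mul_of_nonneg_left hcut (by positivity)).trans_eq ?_
    have : R ≠ 0 := by positivity
    rw [pow_succ, mul_inv, mul_assoc, inv_mul_cancel_left₀ this]
  rw [hsplit]
  linarith

/-- Lemma on cut-balanced matrices, second inequality:
with agents indexed by {1,…,n}, non-negative weights b satisfying the cut-balance bounds
with constant R ≥ 1, and a sorted vector y, for every l ∈ {1,…,n−1},
Σ_{i=1}^l R^{−i} Σ_{j=1}^n b_{ij}(y_j − y_i) ≥ (y_{l+1} − y_l) R^{−l} Σ_{i=l+1}^n Σ_{j=1}^l b_{ji}. -/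
theorem stmt13 (n : ℕ) (hn : 2 ≤ n) (b : ℕ → ℕ → ℝ) (hb : ∀ i j, 0 ≤ b i j)
    (R : ℝ) (hR : 1 ≤ R)
    (hcb : ∀ S : Finset ℕ, S ⊆ Finset.Icc 1 n → S.Nonempty → S ≠ Finset.Icc 1 n →
      R⁻¹ * (∑ i ∈ S, ∑ j ∈ Finset.Icc 1 n \ S, b i j) ≤
        ∑ i ∈ S, ∑ j ∈ Finset.Icc 1 n \ S, b j i ∧
      ∑ i ∈ S, ∑ j ∈ Finset.Icc 1 n \ S, b j i ≤
        R * (∑ i ∈ S, ∑ j ∈ Finset.Icc 1 n \ S, b i j))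
    (y : ℕ → ℝ) (hy : ∀ i j, 1 ≤ i → i ≤ j → j ≤ n → y i ≤ y j)
    (l : ℕ) (hl : 1 ≤ l) (hln : l + 1 ≤ n) :
    (y (l+1) - y l) * (R ^ l)⁻¹ *
        (∑ i ∈ Finset.Icc (l+1) n, ∑ j ∈ Finset.Icc 1 l, b j i) ≤
      ∑ i ∈ Finset.Icc 1 l, (R ^ i)⁻¹ * (∑ j ∈ Finset.Icc 1 n, b i j * (y j - y i)) := by
  have hd : ∀ k ∈ Ico 1 n, 0 ≤ y (k + 1) - y k := fun k hk => by
    rw [mem_Ico] at hk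
    exact sub_nonneg.2 (hy k (k + 1) hk.1 (Nat.le_succ k) hk.2)
  have hC : ∀ k ∈ Ico 1 n, 0 ≤ gapCoeff n b R l k := fun k hk => by
    rw [mem_Ico] at hk
    rcases le_or_gt l k with h | h
    · exact gapCoeff_nonneg_of_le n b hb R hR l k h
    · have hS : Icc 1 n \ Icc 1 k = Icc (k + 1) n := by
        ext j; simp only [mem_sdiff, mem_Icc]; omega
      have hne : Icc 1 k ≠ Icc 1 n := fun e => by
        have := congrArg card e
        simp only [Nat.card_Icc] at this
        omega
      have hcut := (hcb (Icc 1 k) (Icc_subset_Icc_right hk.2.le) (nonempty_Icc.2 hk.1) hne).2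
      rw [hS] at hcut
      exact gapCoeff_nonneg_of_lt n b hb R hR l k h (by omega) hcut
  have hlmem : l ∈ Ico 1 n := mem_Ico.2 ⟨hl, hln⟩
  rw [sum_eq_sum_gapCoeff n b R y l (by omega), mul_assoc]
  exact (mul_le_mul_of_nonneg_left (le_gapCoeff_self n b hb R hR l) (hd l hlmem)).trans
    (single_le_sum (f := fun k => (y (k + 1) - y k) * gapCoeff n b R l k)
      (fun k hk => mul_nonneg (hd k hk) (hC k hk)) hlmem)
end

section
/- Let b_{ij} ≥ 0 (i,j ∈ {1,…,n}), let y ∈ ℝ^n satisfy y_1 ≤ y_2 ≤ … ≤ y_n, and let w_1 ≥ w_2 ≥ … ≥ w_n ≥ 0 be non-negative non-increasing weights. Then Σ_{i=1}^n w_i (Σ_{j=1}^n b_{ij}(y_j − y_i)) ≥ Σ_{k=1}^{n−1} (y_{k+1} − y_k) (w_k Σ_{i=k+1}^n Σ_{j=1}^k b_{ji} − w_{k+1} Σ_{i=k+1}^n Σ_{j=1}^k b_{ij}). -/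
/-!
Write `d k = y (k+1) - y k ≥ 0`. Both sides are linear in `b`. On the left, the coefficient of
`b i j` is `∑ k, d k * ([i ≤ k < j] * w k - [j ≤ k < i] * w (k+1))`; on the right it is
`w i * (y j - y i) = w i * ∑ k, d k * ([i ≤ k < j] - [j ≤ k < i])` by telescoping. These compare
term by term in `k`: if `i ≤ k` then `w k ≤ w i`, and if `k < i` then `w i ≤ w (k+1)`.
Since `b i j ≥ 0`, the inequality follows.
-/

open Finset

/-- Telescoping, with the upper limit `j` encoded by an indicator so that the range of summation
does not depend on `j`. -/
lemma sum_gap_lt (n : ℕ) (y : ℕ → ℝ) (j : ℕ) (h1 : 1 ≤ j) (hj : j ≤ n) :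
    ∑ k ∈ Finset.Icc 1 (n-1), (y (k+1) - y k) * (if k < j then 1 else 0) = y j - y 1 := by
  have e : (Finset.Icc 1 (n-1)).filter (fun k => k < j) = Finset.Ico 1 j := by
    ext k
    simp only [Finset.mem_filter, Finset.mem_Icc, Finset.mem_Ico]
    omega
  simp only [mul_ite, mul_one, mul_zero]
  rw [← Finset.sum_filter, e, Finset.sum_Ico_sub y h1]

/-- The cut sum over `i ≤ k < j`, written over the full square with an indicator. -/
lemma cut_sum (n k : ℕ) (hk : k ≤ n) (f : ℕ → ℕ → ℝ) :
    ∑ i ∈ Finset.Icc 1 k, ∑ j ∈ Finset.Icc (k+1) n, f i j =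
      ∑ i ∈ Finset.Icc 1 n, ∑ j ∈ Finset.Icc 1 n, if i ≤ k ∧ k < j then f i j else 0 := by
  have e1 : Finset.Icc 1 k = (Finset.Icc 1 n).filter (fun i => i ≤ k) := by
    ext i
    simp only [Finset.mem_filter, Finset.mem_Icc]
    omega
  have e2 : Finset.Icc (k+1) n = (Finset.Icc 1 n).filter (fun j => k < j) := by
    ext j
    simp only [Finset.mem_filter, Finset.mem_Icc]
    omega
  rw [e1, e2, Finset.sum_filter]
  refine Finset.sum_congr rfl fun i _ => ?_
  by_cases h : i ≤ k <;> simp [h, Finset.sum_filter]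

/-- Comparison of the coefficients of `b i j` on the two sides. -/
lemma coeff_le (n : ℕ) (y : ℕ → ℝ) (hy : ∀ i j, 1 ≤ i → i ≤ j → j ≤ n → y i ≤ y j)
    (w : ℕ → ℝ) (hw : ∀ i j, 1 ≤ i → i ≤ j → j ≤ n → w j ≤ w i)
    (i j : ℕ) (hi : 1 ≤ i) (hin : i ≤ n) (hj : 1 ≤ j) (hjn : j ≤ n) :
    ∑ k ∈ Finset.Icc 1 (n-1), (y (k+1) - y k) *
        (w k * (if i ≤ k ∧ k < j then 1 else 0) - w (k+1) * (if j ≤ k ∧ k < i then 1 else 0)) ≤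
      w i * (y j - y i) := by
  have e : w i * (y j - y i) = ∑ k ∈ Finset.Icc 1 (n-1), (y (k+1) - y k) *
      (w i * ((if k < j then 1 else 0) - (if k < i then 1 else 0))) := by
    rw [show y j - y i = (y j - y 1) - (y i - y 1) by ring, ← sum_gap_lt n y j hj hjn,
      ← sum_gap_lt n y i hi hin, ← Finset.sum_sub_distrib, Finset.mul_sum]
    exact Finset.sum_congr rfl fun k _ => by ring
  rw [e]
  refine Finset.sum_le_sum fun k hk => ?_
  rw [Finset.mem_Icc] at hk
  refine mul_le_mul_of_nonneg_left ?_
    (sub_nonneg.2 (hy k (k+1) hk.1 (by omega) (by omega)))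
  by_cases hki : k < i
  · have hwk := hw (k+1) i (by omega) hki hin
    by_cases hkj : k < j
    · simp [hki, hkj, not_le.2 hki, not_le.2 hkj]
    · simp [hki, hkj, not_lt.1 hkj, hwk]
  · have hwk := hw i k hi (by omega) (by omega)
    by_cases hkj : k < j
    · simp [hki, hkj, not_lt.1 hki, hwk]
    · simp [hki, hkj]

/-- Abel-summation inequality: for non-negative weights b, a sorted
vector y and non-negative non-increasing weights w (indices 1,…,n),
Σ_{i=1}^n w_i Σ_{j=1}^n b_{ij}(y_j − y_i) ≥
Σ_{k=1}^{n−1} (y_{k+1} − y_k)(w_k Σ_{i=k+1}^n Σ_{j=1}^k b_{ji} − w_{k+1} Σ_{i=k+1}^n Σ_{j=1}^k b_{ij}). -/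
theorem stmt14 (n : ℕ) (hn : 2 ≤ n) (b : ℕ → ℕ → ℝ) (hb : ∀ i j, 0 ≤ b i j)
    (y : ℕ → ℝ) (hy : ∀ i j, 1 ≤ i → i ≤ j → j ≤ n → y i ≤ y j)
    (w : ℕ → ℝ) (hw0 : ∀ i, 0 ≤ w i)
    (hw : ∀ i j, 1 ≤ i → i ≤ j → j ≤ n → w j ≤ w i) :
    ∑ k ∈ Finset.Icc 1 (n-1), (y (k+1) - y k) *
        (w k * (∑ i ∈ Finset.Icc (k+1) n, ∑ j ∈ Finset.Icc 1 k, b j i) -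
         w (k+1) * (∑ i ∈ Finset.Icc (k+1) n, ∑ j ∈ Finset.Icc 1 k, b i j)) ≤
      ∑ i ∈ Finset.Icc 1 n, w i * (∑ j ∈ Finset.Icc 1 n, b i j * (y j - y i)) := by
  -- The left side, with the coefficient of each `b i j` collected.
  have key : ∑ k ∈ Finset.Icc 1 (n-1), (y (k+1) - y k) *
        (w k * (∑ i ∈ Finset.Icc (k+1) n, ∑ j ∈ Finset.Icc 1 k, b j i) -
         w (k+1) * (∑ i ∈ Finset.Icc (k+1) n, ∑ j ∈ Finset.Icc 1 k, b i j)) =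
      ∑ i ∈ Finset.Icc 1 n, ∑ j ∈ Finset.Icc 1 n, b i j *
        ∑ k ∈ Finset.Icc 1 (n-1), (y (k+1) - y k) *
          (w k * (if i ≤ k ∧ k < j then 1 else 0) -
            w (k+1) * (if j ≤ k ∧ k < i then 1 else 0)) := by
    simp only [Finset.mul_sum (Finset.Icc 1 (n-1))]
    rw [Finset.sum_congr rfl fun i _ => Finset.sum_comm, Finset.sum_comm]
    refine Finset.sum_congr rfl fun k hk => ?_
    have hkn : k ≤ n := by
      rw [Finset.mem_Icc] at hk
      omega
    rw [Finset.sum_comm, cut_sum n k hkn b,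
      Finset.sum_comm (s := Finset.Icc (k+1) n) (f := fun i j => b i j),
      cut_sum n k hkn (fun j i => b i j),
      Finset.sum_comm (f := fun j i => if j ≤ k ∧ k < i then b i j else 0)]
    simp only [Finset.mul_sum, ← Finset.sum_sub_distrib]
    refine Finset.sum_congr rfl fun i _ => Finset.sum_congr rfl fun j _ => ?_
    split_ifs <;> ring
  rw [key]
  refine Finset.sum_le_sum fun i hi => ?_
  rw [Finset.mul_sum]
  refine Finset.sum_le_sum fun j hj => ?_
  rw [Finset.mem_Icc] at hi hj
  calc _ ≤ b i j * (w i * (y j - y i)) :=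
        mul_le_mul_of_nonneg_left (coeff_le n y hy w hw i j hi.1 hi.2 hj.1 hj.2) (hb i j)
    _ = _ := by ring
end
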